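/- arXiv:1711.01975 — 6 statements merged into one kernel-verified Lean document; each statement's English description precedes it below -/
import Mathlib

section
/- Let k ≥ 2 and let F be a finite field of characteristic 2. There exists a constant C depending only on k such that: for every x ∈ F^k whose coordinates are pairwise distinct and nonzero and such that no (k−2)-element subset of the set of coordinates of x sums to 0, the number of vectors a ∈ F^k for which either V(x,a) = 0 for some vertex operator V ∈ VO, or V(x,a) = V′(x,a) for two distinct vertex operators V, V′ ∈ VO, is at most C·|F|^{k−1}. (For k ∈ {3,4} the hypothesis on (k−2)-subsets holds automatically.) -/
open Finset

section LinOps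

variable (F : Type*) [Field F] (k : ℕ)

/-- Inclusion of the first block: `x ↦ (x, 0)`. -/
def inlMap : (Fin k → F) →ₗ[F] ((Fin k ⊕ Fin k) → F) where
  toFun x := Sum.elim x 0
  map_add' x y := by funext s; cases s <;> simp
  map_smul' c x := by funext s; cases s <;> simp

/-- Inclusion of the second block: `a ↦ (0, a)`. -/
def inrMap : (Fin k → F) →ₗ[F] ((Fin k ⊕ Fin k) → F) where
  toFun a := Sum.elim 0 a
  map_add' x y := by funext s; cases s <;> simp
  map_smul' c x := by funext s; cases s <;> simp

variable {F k}

/-- For `T : F^{2k} → M`, the map `T₁ : F^k → M`, `x ↦ T(x,0)`. -/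
def leftPart {M : Type*} [AddCommMonoid M] [Module F M]
    (T : ((Fin k ⊕ Fin k) → F) →ₗ[F] M) : (Fin k → F) →ₗ[F] M :=
  T ∘ₗ inlMap F k

/-- For `T : F^{2k} → M`, the map `T₂ : F^k → M`, `a ↦ T(0,a)`. -/
def rightPart {M : Type*} [AddCommMonoid M] [Module F M]
    (T : ((Fin k ⊕ Fin k) → F) →ₗ[F] M) : (Fin k → F) →ₗ[F] M :=
  T ∘ₗ inrMap F k

variable (F k)

/-- The operator `C : F^k → F^{2k}` given by the block matrix `[I; J + I]`. -/
def Cop : (Fin k → F) →ₗ[F] ((Fin k ⊕ Fin k) → F) where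
  toFun x := Sum.elim x fun i => x i + ∑ j, x j
  map_add' x y := by
    funext s; cases s <;> simp [Finset.sum_add_distrib] <;> ring
  map_smul' c x := by
    funext s; cases s <;> simp [Finset.mul_sum, mul_add]

variable {k}

/-- The operator `E_I : F^{2k} → F^k` given by the block matrix `[X_{[k]\I} X_I]`. -/
def Eop (I : Finset (Fin k)) : ((Fin k ⊕ Fin k) → F) →ₗ[F] (Fin k → F) where
  toFun y i := if i ∈ I then y (Sum.inr i) else y (Sum.inl i)
  map_add' x y := by funext i; by_cases h : i ∈ I <;> simp [h]
  map_smul' c x := by funext i; by_cases h : i ∈ I <;> simp [h]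

variable {F}

/-- The map `Fin (k-1) → Fin k` skipping `i`. -/
def delIdx {k : ℕ} (i : Fin k) (j : Fin (k - 1)) : Fin k :=
  if (j : ℕ) < (i : ℕ) then ⟨j, by have := j.isLt; omega⟩
  else ⟨(j : ℕ) + 1, by have := j.isLt; omega⟩

variable (F)

/-- The projection `P_i : F^k → F^{k-1}` deleting the `i`-th coordinate. -/
def Pop (i : Fin k) : (Fin k → F) →ₗ[F] (Fin (k - 1) → F) :=
  LinearMap.funLeft F F (delIdx i)

variable (k)

/-- The vertex operators `VO = VO₁ ∪ VO₂`. -/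
def VO : Set (((Fin k ⊕ Fin k) → F) →ₗ[F] F) :=
  {V | (∃ i : Fin k, V = LinearMap.proj i ∘ₗ Eop F (∅ : Finset (Fin k)) ∨
          V = LinearMap.proj i ∘ₗ Eop F (Finset.univ : Finset (Fin k))) ∨
       (∃ (i : Fin k) (I : Finset (Fin k)), I.Nonempty ∧ Even I.card ∧
          V = LinearMap.proj i ∘ₗ Eop F (Finset.univ : Finset (Fin k)) ∘ₗ Cop F k ∘ₗ Eop F I)}

/-- The facet operators `FO₁ = {P_i E_∅}`. -/
def FO1 : Set (((Fin k ⊕ Fin k) → F) →ₗ[F] (Fin (k - 1) → F)) :=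
  {T | ∃ i : Fin k, T = Pop F i ∘ₗ Eop F (∅ : Finset (Fin k))}

/-- The facet operators `FO₂ = {P_i E_J C E_I : |J| even, I ≠ ∅, |I| even}`. -/
def FO2 : Set (((Fin k ⊕ Fin k) → F) →ₗ[F] (Fin (k - 1) → F)) :=
  {T | ∃ (i : Fin k) (J I : Finset (Fin k)), Even J.card ∧ I.Nonempty ∧ Even I.card ∧
        T = Pop F i ∘ₗ Eop F J ∘ₗ Cop F k ∘ₗ Eop F I}

/-- The facet operators `FO = FO₁ ∪ FO₂`. -/
def FO : Set (((Fin k ⊕ Fin k) → F) →ₗ[F] (Fin (k - 1) → F)) :=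
  FO1 F k ∪ FO2 F k

/-- The edge operators `EO = EO₁ ∪ EO₂`. -/
def EO : Set (((Fin k ⊕ Fin k) → F) →ₗ[F] (Fin k → F)) :=
  {T | (∃ I : Finset (Fin k), Odd I.card ∧ T = Eop F I) ∨
       (∃ J I : Finset (Fin k), J.Nonempty ∧ I.Nonempty ∧ Even I.card ∧
          T = Eop F J ∘ₗ Cop F k ∘ₗ Eop F I)}

end LinOps

/-- The index pairs `(A, X)` for which `(x, a) ↦ ∑_A a + ∑_X x` is a vertex operator. -/
def IsVertexPair {k : ℕ} (A X : Finset (Fin k)) : Prop :=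
  (A = ∅ ∧ ∃ i, X = {i}) ∨ (X = ∅ ∧ ∃ i, A = {i}) ∨
    (A.Nonempty ∧ ∃ i, i ∉ A ∧ X = Aᶜ.erase i)

lemma exists_isVertexPair {F : Type*} [Field F] {k : ℕ} (hF : ringChar F = 2)
    {V : ((Fin k ⊕ Fin k) → F) →ₗ[F] F} (hV : V ∈ VO F k) :
    ∃ A X : Finset (Fin k), IsVertexPair A X ∧
      ∀ y, V y = ∑ j ∈ A, y (Sum.inr j) + ∑ j ∈ X, y (Sum.inl j) := by
  have : CharP F 2 := hF ▸ ringChar.charP F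
  rcases hV with ⟨i, rfl | rfl⟩ | ⟨i, I, hI, hIe, rfl⟩
  · exact ⟨∅, {i}, Or.inl ⟨rfl, i, rfl⟩, fun y => by simp [Eop]⟩
  · exact ⟨{i}, ∅, Or.inr (Or.inl ⟨rfl, i, rfl⟩), fun y => by simp [Eop]⟩
  · refine ⟨I.erase i, (I.erase i)ᶜ.erase i,
      Or.inr (Or.inr ⟨?_, i, notMem_erase i I, rfl⟩), fun y => ?_⟩
    · have hpos := hI.card_pos
      have herase := pred_card_le_card_erase (s := I) (a := i)
      obtain ⟨r, hr⟩ := hIe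
      exact card_pos.1 (by omega)
    · have hy : ∀ z : Fin k → F, z i + ∑ j, z j = ∑ j ∈ univ.erase i, z j := fun z => by
        rw [← add_sum_erase univ z (mem_univ i), ← add_assoc, CharTwo.add_self_eq_zero, zero_add]
      have hsplit : univ.erase i = I.erase i ∪ (I.erase i)ᶜ.erase i := by
        ext j
        by_cases hj : j ∈ I <;> by_cases hji : j = i <;> simp [hj, hji]
      have hdisj : Disjoint (I.erase i) ((I.erase i)ᶜ.erase i) :=
        disjoint_compl_right.mono_right (erase_subset _ _)
      have hval : (LinearMap.proj i ∘ₗ Eop F univ ∘ₗ Cop F k ∘ₗ Eop F I) y =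
          Eop F I y i + ∑ j, Eop F I y j := by
        simp [Eop, Cop]
      rw [hval, hy, hsplit, sum_union hdisj]
      congr 1
      · exact sum_congr rfl fun j hj => if_pos (mem_of_mem_erase hj)
      · refine sum_congr rfl fun j hj => if_neg fun hjI => ?_
        simp only [mem_erase, mem_compl, not_and] at hj
        exact hj.2 hj.1 hjI

lemma IsVertexPair.nonempty_or_sum_ne_zero {F : Type*} [Field F] {k : ℕ}
    {A X : Finset (Fin k)} (h : IsVertexPair A X) {x : Fin k → F} (hx : ∀ i, x i ≠ 0) :
    A ≠ ∅ ∨ ∑ j ∈ X, x j ≠ 0 := by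
  rcases h with ⟨-, i, rfl⟩ | ⟨-, i, rfl⟩ | ⟨hA, -⟩
  · exact Or.inr (by simpa using hx i)
  · exact Or.inl (singleton_ne_empty i)
  · exact Or.inl hA.ne_empty

lemma card_compl_singleton_erase {k : ℕ} {i j : Fin k} (h : i ≠ j) :
    (({j} : Finset (Fin k))ᶜ.erase i).card = k - 2 := by
  rw [card_erase_of_mem (by simpa using h), card_compl, card_singleton, Fintype.card_fin]
  omega

lemma IsVertexPair.sum_ne {F : Type*} [Field F] {k : ℕ} {A X Y : Finset (Fin k)}
    (hX : IsVertexPair A X) (hY : IsVertexPair A Y) (hXY : X ≠ Y) {x : Fin k → F}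
    (hinj : Function.Injective x)
    (hsum : ∀ s : Finset (Fin k), s.card = k - 2 → ∑ i ∈ s, x i ≠ 0) :
    ∑ j ∈ X, x j ≠ ∑ j ∈ Y, x j := by
  rcases hX with ⟨hA, i, rfl⟩ | ⟨rfl, i, hA⟩ | ⟨hA, i, hi, rfl⟩ <;>
    rcases hY with ⟨hA', j, rfl⟩ | ⟨rfl, j, hA'⟩ | ⟨hA', j, hj, rfl⟩
  · have hij : i ≠ j := fun h => hXY (h ▸ rfl)
    simpa using hinj.ne hij
  · simp_all
  · simp_all
  · simp_all
  · exact absurd rfl hXY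
  · subst hA
    rw [sum_empty]
    exact (hsum _ (card_compl_singleton_erase (by simpa using hj))).symm
  · simp_all
  · subst hA'
    rw [sum_empty]
    exact hsum _ (card_compl_singleton_erase (by simpa using hi))
  · intro h
    have hij : i ≠ j := fun h => hXY (h ▸ rfl)
    have h1 := add_sum_erase Aᶜ x (mem_compl.2 hi)
    have h2 := add_sum_erase Aᶜ x (mem_compl.2 hj)
    rw [h, ← h2] at h1
    exact hij (hinj (add_right_cancel h1))

/-- An affine equation over `F` in `k` unknowns with coefficients `0`, `±1` that is not an identity
has at most `|F|^(k-1)` solutions. -/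
lemma card_sum_add_eq_le {F : Type*} [Field F] [Fintype F] [DecidableEq F] {k : ℕ}
    {A B : Finset (Fin k)} {c d : F} (h : A ≠ B ∨ c ≠ d) :
    (univ.filter fun a : Fin k → F => ∑ j ∈ A, a j + c = ∑ j ∈ B, a j + d).card ≤
      Fintype.card F ^ (k - 1) := by
  by_cases hAB : A = B
  · have hcd := h.resolve_left (not_not.2 hAB)
    subst hAB
    simp [hcd]
  wlog hi : ∃ i ∈ A, i ∉ B generalizing A B c d
  · have hi' : ∃ i ∈ B, i ∉ A := by
      by_contra! hBA
      push Not at hi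
      exact hAB (Subset.antisymm hi hBA)
    simpa only [eq_comm] using this (c := d) (d := c) (Or.inl (Ne.symm hAB)) (Ne.symm hAB) hi'
  obtain ⟨i, hiA, hiB⟩ := hi
  have hcard : Fintype.card F ^ (k - 1) = Fintype.card ({j : Fin k // j ≠ i} → F) := by
    simp [Fintype.card_subtype_compl]
  rw [hcard, ← card_univ]
  refine card_le_card_of_injOn (fun a j => a j) (fun _ _ => mem_coe.2 (mem_univ _)) ?_
  intro a ha b hb hab
  have hne : ∀ j, j ≠ i → a j = b j := fun j hj => congrFun hab ⟨j, hj⟩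
  simp only [coe_filter, mem_univ, true_and, Set.mem_ofPred_eq] at ha hb
  rw [← add_sum_erase A _ hiA] at ha hb
  have hA : ∑ j ∈ A.erase i, a j = ∑ j ∈ A.erase i, b j :=
    sum_congr rfl fun j hj => hne j (ne_of_mem_erase hj)
  have hB : ∑ j ∈ B, a j = ∑ j ∈ B, b j :=
    sum_congr rfl fun j hj => hne j (ne_of_mem_of_not_mem hj hiB)
  rw [hA, hB, ← hb] at ha
  funext j
  by_cases hj : j = i
  · exact hj ▸ add_right_cancel (add_right_cancel ha)
  · exact hne j hj

/-- for `x ∈ F^k` with pairwise distinct nonzero coordinates, no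
`(k-2)`-subset of whose coordinates sums to `0`, the number of `a ∈ F^k` making
some vertex operator vanish, or two distinct vertex operators agree, on `(x,a)`
is at most `C·|F|^{k-1}`. -/
theorem stmt_4 (k : ℕ) (hk : 2 ≤ k) :
    ∃ C : ℝ, 0 < C ∧
      ∀ (F : Type) [Field F] [Fintype F], ringChar F = 2 →
        ∀ x : Fin k → F, Function.Injective x → (∀ i, x i ≠ 0) →
          (∀ s : Finset (Fin k), s.card = k - 2 → ∑ i ∈ s, x i ≠ 0) →
          (Set.ncard {a : Fin k → F |
              (∃ V ∈ VO F k, V (Sum.elim x a) = 0) ∨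
              (∃ V ∈ VO F k, ∃ V' ∈ VO F k, V ≠ V' ∧
                 V (Sum.elim x a) = V' (Sum.elim x a))} : ℝ) ≤
            C * (Fintype.card F : ℝ) ^ (k - 1) := by
  classical
  let P := Finset (Fin k) × Finset (Fin k)
  refine ⟨(Fintype.card (P × P) : ℝ), by exact_mod_cast Fintype.card_pos, ?_⟩
  intro F _ _ hF x hinj hx hsum
  let f : P → (Fin k → F) → F := fun p a => ∑ j ∈ p.1, a j + ∑ j ∈ p.2, x j
  let good : Finset (P × P) := univ.filter fun p =>
    p.1.1 ≠ p.2.1 ∨ ∑ j ∈ p.1.2, x j ≠ ∑ j ∈ p.2.2, x j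
  let cover : Finset (Fin k → F) := good.biUnion fun p => univ.filter fun a => f p.1 a = f p.2 a
  have hcover : cover.card ≤ Fintype.card (P × P) * Fintype.card F ^ (k - 1) :=
    (card_biUnion_le_card_mul _ _ _ fun p hp => card_sum_add_eq_le (mem_filter.1 hp).2).trans
      (Nat.mul_le_mul_right _ (card_le_univ _))
  refine le_trans (b := (cover.card : ℝ)) ?_ (by exact_mod_cast hcover)
  rw [← Set.ncard_coe_finset, Nat.cast_le]
  refine Set.ncard_le_ncard ?_ (finite_toSet _)
  have mem_cover : ∀ (p : P × P) (a : Fin k → F),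
      (p.1.1 ≠ p.2.1 ∨ ∑ j ∈ p.1.2, x j ≠ ∑ j ∈ p.2.2, x j) → f p.1 a = f p.2 a →
      a ∈ (cover : Set (Fin k → F)) := fun p a hp ha =>
    mem_coe.2 (mem_biUnion.2 ⟨p, mem_filter.2 ⟨mem_univ _, hp⟩, mem_filter.2 ⟨mem_univ _, ha⟩⟩)
  rintro a (⟨V, hV, h0⟩ | ⟨V, hV, V', hV', hne, heq⟩)
  · obtain ⟨A, X, hAX, hval⟩ := exists_isVertexPair hF hV
    rw [hval] at h0
    exact mem_cover ((A, X), (∅, ∅)) a (by simpa using hAX.nonempty_or_sum_ne_zero hx)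
      (by simpa [f] using h0)
  · obtain ⟨A, X, hAX, hval⟩ := exists_isVertexPair hF hV
    obtain ⟨B, Y, hBY, hval'⟩ := exists_isVertexPair hF hV'
    rw [hval, hval'] at heq
    refine mem_cover ((A, X), (B, Y)) a (or_iff_not_imp_left.2 fun hAB => ?_)
      (by simpa [f] using heq)
    obtain rfl : A = B := not_not.1 hAB
    refine hAX.sum_ne hBY (fun hXY => hne ?_) hinj hsum
    subst hXY
    exact LinearMap.ext fun y => (hval y).trans (hval' y).symm
end

section
/- Let k ≥ 2 and let F be a finite field of characteristic 2. For every facet operator F ∈ FO the following hold: (1) if F ∈ FO_2 then there exist distinct i, j ∈ [k] such that the standard basis vectors e_i and e_j lie in the kernel of F_1; (2) if F ∈ FO_2 then rank F_2 ≥ 1; (3) for every f ∈ F^{k−1}, the set {a ∈ F^k : there exists s ∈ F^k with F_1 s + F_2 a = f} is an affine subspace of F^k of dimension rank F_1 + 1. -/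
open Finset

theorem delIdx_injective {k : ℕ} (i : Fin k) : Function.Injective (delIdx i) := by
  intro a b h
  unfold delIdx at h
  ext
  split_ifs at h <;> simp only [Fin.mk.injEq] at h <;> omega

theorem exists_delIdx_eq {k : ℕ} {i m : Fin k} (h : m ≠ i) : ∃ j, delIdx i j = m := by
  have hne : (m : ℕ) ≠ i := fun e => h (Fin.ext e)
  have hm := m.isLt
  have hi := i.isLt
  rcases lt_or_gt_of_ne hne with hlt | hgt
  · exact ⟨⟨m, by omega⟩, by simp [delIdx, hlt]⟩
  · refine ⟨⟨m - 1, by omega⟩, ?_⟩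
    have : ¬ ((m : ℕ) - 1 < i) := by omega
    ext
    simp only [delIdx, this, if_false]
    omega

section Surjectivity

variable {F : Type*} [Field F] {k : ℕ}

theorem Pop_surjective (i : Fin k) : Function.Surjective (Pop F i) :=
  LinearMap.funLeft_surjective_of_injective F F _ (delIdx_injective i)

theorem Eop_surjective (I : Finset (Fin k)) : Function.Surjective (Eop F I) :=
  fun y => ⟨Sum.elim y y, by funext m; simp [Eop]⟩

theorem Eop_Cop_apply (J : Finset (Fin k)) (y : Fin k → F) (m : Fin k) :
    Eop F J (Cop F k y) m = y m + if m ∈ J then ∑ j, y j else 0 := by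
  by_cases h : m ∈ J <;> simp [Eop, Cop, h]

/-- In characteristic two, `E_J C` is an involution when `|J|` is even. -/
theorem Eop_Cop_involutive [CharP F 2] {J : Finset (Fin k)} (hJ : Even J.card) :
    Function.Involutive (fun y => Eop F J (Cop F k y)) := by
  intro y
  have hcard : (J.card : F) = 0 := (CharP.cast_eq_zero_iff F 2 _).2 hJ.two_dvd
  have hsum : ∑ m, Eop F J (Cop F k y) m = ∑ m, y m := by
    simp [Eop_Cop_apply, Finset.sum_add_distrib, hcard]
  funext m
  change Eop F J (Cop F k (Eop F J (Cop F k y))) m = y m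
  rw [Eop_Cop_apply, hsum, Eop_Cop_apply, add_assoc, CharTwo.add_self_eq_zero, add_zero]

theorem surjective_of_mem_FO [CharP F 2] {T : ((Fin k ⊕ Fin k) → F) →ₗ[F] (Fin (k - 1) → F)}
    (hT : T ∈ FO F k) : Function.Surjective T := by
  rcases hT with ⟨i, rfl⟩ | ⟨i, J, I, hJ, -, -, rfl⟩
  · exact (Pop_surjective i).comp (Eop_surjective ∅)
  · exact (Pop_surjective i).comp ((Eop_Cop_involutive hJ).surjective.comp (Eop_surjective I))

end Surjectivity

section Parts

variable {F : Type*} [Field F] {k : ℕ} {M : Type*} [AddCommGroup M] [Module F M]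

theorem leftPart_add_rightPart (T : ((Fin k ⊕ Fin k) → F) →ₗ[F] M) (x a : Fin k → F) :
    leftPart T x + rightPart T a = T (Sum.elim x a) := by
  simp only [leftPart, rightPart, LinearMap.comp_apply, ← map_add]
  congr 1
  funext s
  cases s <;> simp [inlMap, inrMap]

theorem exists_leftPart_add_rightPart_eq {T : ((Fin k ⊕ Fin k) → F) →ₗ[F] M}
    (hT : Function.Surjective T) (f : M) : ∃ a x, leftPart T x + rightPart T a = f := by
  obtain ⟨y, rfl⟩ := hT f
  exact ⟨y ∘ Sum.inr, y ∘ Sum.inl, by rw [leftPart_add_rightPart, Sum.elim_comp_inl_inr]⟩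

theorem finrank_comap_rightPart_range_leftPart [FiniteDimensional F M]
    {T : ((Fin k ⊕ Fin k) → F) →ₗ[F] M} (hT : Function.Surjective T) :
    Module.finrank F ((LinearMap.range (leftPart T)).comap (rightPart T)) + Module.finrank F M =
      k + Module.finrank F (LinearMap.range (leftPart T)) := by
  set R := LinearMap.range (leftPart T) with hR
  have hsurj : Function.Surjective (R.mkQ ∘ₗ rightPart T) := by
    intro q
    obtain ⟨f, rfl⟩ := R.mkQ_surjective q
    obtain ⟨a, x, rfl⟩ := exists_leftPart_add_rightPart_eq hT f
    refine ⟨a, ?_⟩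
    have hx : R.mkQ (leftPart T x) = 0 := by simp [hR]
    simp only [LinearMap.comp_apply, map_add, hx, zero_add]
  have hrank := LinearMap.finrank_range_add_finrank_ker (R.mkQ ∘ₗ rightPart T)
  rw [LinearMap.range_eq_top.2 hsurj, finrank_top, LinearMap.ker_comp, Submodule.ker_mkQ,
    Module.finrank_fin_fun] at hrank
  have hquot := R.finrank_quotient_add_finrank
  omega

/-- The vectors `a` for which `T₁ s + T₂ a = f` is solvable in `s` form a coset of
`T₂⁻¹(range T₁)`. -/
theorem exists_affineSubspace_eq_setOf_solvable {T : ((Fin k ⊕ Fin k) → F) →ₗ[F] M}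
    (hT : Function.Surjective T) (f : M) :
    ∃ A : AffineSubspace F (Fin k → F),
      (A : Set (Fin k → F)) = {a | ∃ s, leftPart T s + rightPart T a = f} ∧
      A.direction = (LinearMap.range (leftPart T)).comap (rightPart T) := by
  obtain ⟨p, x, rfl⟩ := exists_leftPart_add_rightPart_eq hT f
  refine ⟨AffineSubspace.mk' p _, ?_, AffineSubspace.direction_mk' _ _⟩
  ext a
  simp only [SetLike.mem_coe, AffineSubspace.mem_mk', vsub_eq_sub, Submodule.mem_comap,
    LinearMap.mem_range, Set.mem_ofPred_eq, map_sub]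
  constructor
  · rintro ⟨s, hs⟩
    exact ⟨x - s, by rw [map_sub, hs]; abel⟩
  · rintro ⟨s, hs⟩
    exact ⟨x - s, by rw [map_sub, sub_eq_sub_iff_add_eq_add, ← hs]; abel⟩

end Parts

section FO2

variable {F : Type*} [Field F] {k : ℕ}

theorem leftPart_comp_Eop_single {M : Type*} [AddCommGroup M] [Module F M]
    (G : (Fin k → F) →ₗ[F] M) {I : Finset (Fin k)} {m : Fin k} (hm : m ∈ I) :
    leftPart (G ∘ₗ Eop F I) (Pi.single m 1) = 0 := by
  have : Eop F I (inlMap F k (Pi.single m 1)) = 0 := by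
    funext n
    by_cases hn : n ∈ I
    · simp [Eop, inlMap, hn]
    · have : n ≠ m := fun e => hn (e ▸ hm)
      simp [Eop, inlMap, hn, this]
  simp [leftPart, this]

theorem rightPart_comp_Eop_single {M : Type*} [AddCommGroup M] [Module F M]
    (G : (Fin k → F) →ₗ[F] M) {I : Finset (Fin k)} {m : Fin k} (hm : m ∈ I) :
    rightPart (G ∘ₗ Eop F I) (Pi.single m 1) = G (Pi.single m 1) := by
  have : Eop F I (inrMap F k (Pi.single m 1)) = Pi.single m 1 := by
    funext n
    by_cases hn : n ∈ I
    · simp [Eop, inrMap, hn, Pi.single_apply]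
    · have : n ≠ m := fun e => hn (e ▸ hm)
      simp [Eop, inrMap, hn, this]
  simp [rightPart, this]

theorem Pop_Eop_Cop_single_ne (i : Fin k) (J : Finset (Fin k)) {m n : Fin k} (hmn : m ≠ n) :
    Pop F i (Eop F J (Cop F k (Pi.single m 1))) ≠
      Pop F i (Eop F J (Cop F k (Pi.single n 1))) := by
  wlog hm : m ≠ i generalizing m n
  · exact (this hmn.symm fun hn => hmn ((not_not.1 hm).trans hn.symm)).symm
  obtain ⟨j, hj⟩ := exists_delIdx_eq hm
  intro h
  have hcoord := congrFun h j
  simp only [Pop, LinearMap.funLeft_apply, hj, Eop_Cop_apply, Finset.sum_pi_single',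
    Finset.mem_univ, if_true] at hcoord
  simp [hmn] at hcoord

theorem exists_ne_mem_of_nonempty_of_even_card {α : Type*} {I : Finset α} (hI : I.Nonempty)
    (hcard : Even I.card) : ∃ m ∈ I, ∃ n ∈ I, m ≠ n := by
  refine Finset.one_lt_card.1 ?_
  have := hI.card_pos
  obtain ⟨r, hr⟩ := hcard
  omega

end FO2

/-- properties of the facet operators.  For `T ∈ FO`:
(1) if `T ∈ FO₂` then two standard basis vectors lie in `ker T₁`;
(2) if `T ∈ FO₂` then `rank T₂ ≥ 1`;
(3) for every `f ∈ F^{k-1}` the set `{a : ∃ s, T₁ s + T₂ a = f}` is an affine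
subspace of `F^k` of dimension `rank T₁ + 1`. -/
theorem stmt_5 (k : ℕ) (hk : 2 ≤ k) (F : Type) [Field F] [Fintype F]
    (hchar : ringChar F = 2)
    (T : ((Fin k ⊕ Fin k) → F) →ₗ[F] (Fin (k - 1) → F)) (hT : T ∈ FO F k) :
    (T ∈ FO2 F k → ∃ i j : Fin k, i ≠ j ∧
        Pi.single i (1 : F) ∈ LinearMap.ker (leftPart T) ∧
        Pi.single j (1 : F) ∈ LinearMap.ker (leftPart T)) ∧
    (T ∈ FO2 F k → 1 ≤ Module.finrank F (LinearMap.range (rightPart T))) ∧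
    (∀ f : Fin (k - 1) → F, ∃ A : AffineSubspace F (Fin k → F),
        (A : Set (Fin k → F)) = {a | ∃ s : Fin k → F, leftPart T s + rightPart T a = f} ∧
        Module.finrank F A.direction =
          Module.finrank F (LinearMap.range (leftPart T)) + 1) := by
  have : CharP F 2 := hchar ▸ ringChar.charP F
  have hsurj := surjective_of_mem_FO hT
  refine ⟨?_, ?_, fun f => ?_⟩
  · rintro ⟨i, J, I, -, hI, hcard, rfl⟩
    obtain ⟨m, hm, n, hn, hmn⟩ := exists_ne_mem_of_nonempty_of_even_card hI hcard
    exact ⟨m, n, hmn, leftPart_comp_Eop_single (Pop F i ∘ₗ Eop F J ∘ₗ Cop F k) hm,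
      leftPart_comp_Eop_single (Pop F i ∘ₗ Eop F J ∘ₗ Cop F k) hn⟩
  · rintro ⟨i, J, I, -, hI, hcard, rfl⟩
    obtain ⟨m, hm, n, hn, hmn⟩ := exists_ne_mem_of_nonempty_of_even_card hI hcard
    rw [Nat.one_le_iff_ne_zero, Ne, Submodule.finrank_eq_zero, LinearMap.range_eq_bot]
    intro h0
    apply Pop_Eop_Cop_single_ne (F := F) i J hmn
    have hm0 := rightPart_comp_Eop_single (Pop F i ∘ₗ Eop F J ∘ₗ Cop F k) hm
    have hn0 := rightPart_comp_Eop_single (Pop F i ∘ₗ Eop F J ∘ₗ Cop F k) hn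
    simp only [LinearMap.comp_assoc, h0, LinearMap.zero_apply] at hm0 hn0
    exact hm0.symm.trans hn0
  · obtain ⟨A, hA, hdir⟩ := exists_affineSubspace_eq_setOf_solvable hsurj f
    refine ⟨A, hA, ?_⟩
    have hrank := finrank_comap_rightPart_range_leftPart hsurj
    rw [Module.finrank_fin_fun] at hrank
    rw [hdir]
    omega
end

section
/- Let k ≥ 2 and let F be a finite field of characteristic 2. For every edge operator E ∈ EO, the kernel of E_2 has dimension at most k−1; equivalently, E_2 is not the zero map. -/
open Finset

/-- A nonzero linear map on `F^k` has kernel of dimension at most `k - 1`. -/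
theorem finrank_ker_le_pred_of_ne_zero {F M : Type*} [Field F] [AddCommGroup M] [Module F M]
    {k : ℕ} {f : (Fin k → F) →ₗ[F] M} (hf : f ≠ 0) :
    Module.finrank F (LinearMap.ker f) ≤ k - 1 := by
  have h := Submodule.finrank_lt (mt LinearMap.ker_eq_top.mp hf)
  rw [Module.finrank_fin_fun] at h
  omega

theorem rightPart_Eop_ne_zero {F : Type*} [Field F] {k : ℕ} {I : Finset (Fin k)}
    (hI : I.Nonempty) : rightPart (Eop F I) ≠ 0 := by
  obtain ⟨i, hi⟩ := hI
  intro h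
  simpa [rightPart, inrMap, Eop, hi] using congrFun (LinearMap.congr_fun h (Pi.single i 1)) i

/-- On a vector with coordinate sum zero, `E_J C` acts as the identity. -/
theorem Eop_Cop_of_sum_eq_zero {F : Type*} [Field F] {k : ℕ} (J : Finset (Fin k))
    {x : Fin k → F} (hx : ∑ j, x j = 0) : Eop F J (Cop F k x) = x := by
  funext i
  simp [Eop, Cop, hx]

theorem rightPart_Eop_Cop_Eop_ne_zero {F : Type*} [Field F] {k : ℕ} (J : Finset (Fin k))
    {I : Finset (Fin k)} (hI : 1 < I.card) :
    rightPart (Eop F J ∘ₗ Cop F k ∘ₗ Eop F I) ≠ 0 := by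
  obtain ⟨i, hi, j, hj, hij⟩ := Finset.one_lt_card.mp hI
  intro h
  have hE : Eop F I (inrMap F k (Pi.single i 1 - Pi.single j 1)) =
      Pi.single i 1 - Pi.single j 1 := by
    funext l
    by_cases hl : l ∈ I
    · simp [Eop, inrMap, hl]
    · have hli : l ≠ i := fun e => hl (e ▸ hi)
      have hlj : l ≠ j := fun e => hl (e ▸ hj)
      simp [Eop, inrMap, hl, hli, hlj]
  have h0 := LinearMap.congr_fun h (Pi.single i 1 - Pi.single j 1)
  simp only [rightPart, LinearMap.comp_apply, LinearMap.zero_apply] at h0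
  rw [hE, Eop_Cop_of_sum_eq_zero J (by simp [Finset.sum_sub_distrib])] at h0
  simpa [hij] using congrFun h0 i

/-- for every edge operator `T ∈ EO`, `dim ker T₂ ≤ k - 1`;
equivalently `T₂` is not the zero map. -/
theorem stmt_6 (k : ℕ) (hk : 2 ≤ k) (F : Type) [Field F] [Fintype F]
    (hchar : ringChar F = 2)
    (T : ((Fin k ⊕ Fin k) → F) →ₗ[F] (Fin k → F)) (hT : T ∈ EO F k) :
    Module.finrank F (LinearMap.ker (rightPart T)) ≤ k - 1 ∧ rightPart T ≠ 0 := by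
  have hne : rightPart T ≠ 0 := by
    rcases hT with ⟨I, hI, rfl⟩ | ⟨J, I, -, hI, hev, rfl⟩
    · exact rightPart_Eop_ne_zero (Finset.card_pos.mp hI.pos)
    · refine rightPart_Eop_Cop_Eop_ne_zero J ?_
      have := hI.card_pos
      grind
  exact ⟨finrank_ker_le_pred_of_ne_zero hne, hne⟩
end

section
/- For every k ≥ 2 there exists D = D(k) > 0 such that the following holds for all n. Let F be the finite field with 2^m elements where 2n ≤ 2^m ≤ 4n, let τ : [n] ↪ F* be injective, let C > 0, let G ∈ H_{k−1}(n), and let S ⊆ K_k(G) be a K_k-decomposition of G. If τ(G) is C-affine-bounded, then for every f ∈ F^{k−1} and every facet operator F ∈ FO_2: |τ(S) ∩ F_1^{−1}(f)| ≤ D·C·(|S|/n^k)·|F_1^{−1}(f)|. -/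
open Finset

/-- A set `S ⊆ F^ι` is `C`-affine-bounded if for every affine subspace `A` of
dimension at least 1, `|A ∩ S| ≤ C·|A|·|S|/|F|^{|ι|}`. -/
def AffineBounded (F : Type*) [Field F] [Fintype F] {ι : Type*} [Fintype ι]
    (C : ℝ) (S : Set (ι → F)) : Prop :=
  ∀ A : AffineSubspace F (ι → F), (A : Set (ι → F)).Nonempty →
    1 ≤ Module.finrank F A.direction →
    (Set.ncard ((A : Set (ι → F)) ∩ S) : ℝ) ≤
      C * (Nat.card (A : Set (ι → F))) * (Set.ncard S) / (Fintype.card F : ℝ) ^ (Fintype.card ι)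

open Finset

/-- A set `S` of `k`-subsets, each having all its `(k-1)`-subsets in `G`,
such that every facet of `G` lies in exactly one edge of `S`. -/
def IsKDecompositionOf {V : Type*} [DecidableEq V] (k : ℕ) (G S : Finset (Finset V)) : Prop :=
  (∀ e ∈ S, e.card = k ∧ ∀ f ⊆ e, f.card = k - 1 → f ∈ G) ∧
  (∀ f ∈ G, ∃! e, e ∈ S ∧ f ⊆ e)

section Orderings

variable {V : Type*} [DecidableEq V]

theorem injective_of_image_univ_eq {l : ℕ} {u : Fin l → V} {e : Finset V} (he : e.card = l)
    (hu : Finset.image u Finset.univ = e) : Function.Injective u := by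
  have h : (Finset.image u Finset.univ).card = (Finset.univ : Finset (Fin l)).card := by
    rw [hu, he, Finset.card_univ, Fintype.card_fin]
  exact fun a b hab => Finset.card_image_iff.mp h (by simp) (by simp) hab

theorem exists_perm_comp_eq {ι : Type*} [Fintype ι] {u v : ι → V} (hu : Function.Injective u)
    (hv : Function.Injective v) (h : Finset.image u Finset.univ = Finset.image v Finset.univ) :
    ∃ π : Equiv.Perm ι, u ∘ π = v := by
  have hr : Set.range v = Set.range u := by
    have := congrArg (fun s : Finset V => (s : Set V)) h
    simpa using this.symm
  refine ⟨((Equiv.ofInjective v hv).trans (Equiv.setCongr hr)).trans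
    (Equiv.ofInjective u hu).symm, ?_⟩
  funext j
  simp [Equiv.apply_ofInjective_symm]

/-- A `K_k`-decomposition of `G` has at least `|G| / k` edges. -/
theorem IsKDecompositionOf.card_le {k : ℕ} (hk : 1 ≤ k) {G S : Finset (Finset V)}
    (hG : ∀ f ∈ G, f.card = k - 1) (hS : IsKDecompositionOf k G S) :
    G.card ≤ k * S.card := by
  have hsub : G ⊆ S.biUnion fun e => e.powersetCard (k - 1) := by
    intro f hf
    obtain ⟨e, ⟨he, hfe⟩, -⟩ := hS.2 f hf
    exact Finset.mem_biUnion.mpr ⟨e, he, Finset.mem_powersetCard.mpr ⟨hfe, hG f hf⟩⟩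
  refine (Finset.card_le_card hsub).trans ?_
  rw [mul_comm]
  refine Finset.card_biUnion_le_card_mul _ _ _ fun e he => ?_
  rw [Finset.card_powersetCard, (hS.1 e he).1]
  obtain ⟨l, rfl⟩ := Nat.exists_eq_add_of_le' hk
  simp

end Orderings

section Fibres

variable {F M : Type*} [Field F] [AddCommGroup M] [Module F M]

/-- Precompose `L` with the permutation `π` of coordinates followed by insertion of `0` at
position `t`. -/
def restrictPerm {l : ℕ} (L : (Fin (l + 1) → F) →ₗ[F] M) (t : Fin (l + 1))
    (π : Equiv.Perm (Fin l)) : (Fin l → F) →ₗ[F] M where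
  toFun w := L (t.insertNth 0 (w ∘ π))
  map_add' x y := by
    rw [← map_add]
    congr 1
    funext i
    refine t.succAboveCases ?_ (fun j => ?_) i <;> simp
  map_smul' c x := by
    rw [← map_smul]
    congr 1
    funext i
    refine t.succAboveCases ?_ (fun j => ?_) i <;> simp

theorem restrictPerm_apply {l : ℕ} (L : (Fin (l + 1) → F) →ₗ[F] M) (t : Fin (l + 1))
    (π : Equiv.Perm (Fin l)) (w : Fin l → F) :
    restrictPerm L t π w = L (t.insertNth 0 (w ∘ π)) := rfl

/-- `L` ignores coordinate `t` when it kills the `t`-th basis vector. -/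
theorem map_insertNth_eq {l : ℕ} (L : (Fin (l + 1) → F) →ₗ[F] M) (t : Fin (l + 1))
    (ht : L (Pi.single t 1) = 0) (a : F) (w : Fin l → F) :
    L (t.insertNth a w) = L (t.insertNth 0 w) := by
  have h : (t.insertNth a w : Fin (l + 1) → F) = t.insertNth 0 w + a • Pi.single t 1 := by
    funext i
    refine t.succAboveCases ?_ (fun j => ?_) i <;> simp
  rw [h, map_add, map_smul, ht, smul_zero, add_zero]

theorem card_fibre_eq [Fintype F] {l : ℕ} (L : (Fin (l + 1) → F) →ₗ[F] M)
    (t : Fin (l + 1)) (ht : L (Pi.single t 1) = 0) (π : Equiv.Perm (Fin l)) (f : M) :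
    Nat.card (L ⁻¹' {f}) = Fintype.card F * Nat.card (restrictPerm L t π ⁻¹' {f}) := by
  have e : (L ⁻¹' {f}) ≃ F × (restrictPerm L t π ⁻¹' {f}) :=
    { toFun := fun x => (x.1 t, ⟨fun j => x.1 (t.succAbove (π.symm j)), by
        have hx : L x.1 = f := x.2
        rw [Set.mem_preimage, restrictPerm_apply, Set.mem_singleton_iff,
          ← map_insertNth_eq L t ht (x.1 t)]
        refine Eq.trans (congrArg L ?_) hx
        funext i
        refine t.succAboveCases ?_ (fun j => ?_) i <;> simp⟩)
      invFun := fun y => ⟨t.insertNth y.1 (y.2.1 ∘ π), by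
        have hy : restrictPerm L t π y.2.1 = f := y.2.2
        rw [Set.mem_preimage, map_insertNth_eq L t ht, Set.mem_singleton_iff]
        exact hy⟩
      left_inv := fun x => by
        apply Subtype.ext
        funext i
        refine t.succAboveCases ?_ (fun j => ?_) i <;> simp
      right_inv := fun y => by
        refine Prod.ext (by simp) (Subtype.ext ?_)
        funext j
        simp }
  rw [Nat.card_congr e, Nat.card_prod, Nat.card_eq_fintype_card]

/-- Affine-boundedness applied to a fibre of a non-injective linear map. -/
theorem AffineBounded.ncard_fibre_le [Fintype F] {ι : Type*} [Fintype ι] {C : ℝ}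
    (hC : 0 ≤ C) {X : Set (ι → F)} (hX : AffineBounded F C X) (L : (ι → F) →ₗ[F] M)
    {w : ι → F} (hw : w ≠ 0) (hLw : L w = 0) (f : M) :
    (Set.ncard (L ⁻¹' {f} ∩ X) : ℝ) ≤
      C * Nat.card (L ⁻¹' {f}) * Set.ncard X / (Fintype.card F : ℝ) ^ Fintype.card ι := by
  rcases (L ⁻¹' {f}).eq_empty_or_nonempty with h | ⟨p, hp⟩
  · rw [h, Set.empty_inter, Set.ncard_empty, Nat.cast_zero]
    positivity
  · have hA : (AffineSubspace.mk' p (LinearMap.ker L) : Set (ι → F)) = L ⁻¹' {f} := by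
      have hp' : L p = f := hp
      ext x
      simp [AffineSubspace.mem_mk', sub_eq_zero, hp']
    have hdim : 1 ≤ Module.finrank F (AffineSubspace.mk' p (LinearMap.ker L)).direction := by
      rw [AffineSubspace.direction_mk', Nat.one_le_iff_ne_zero, ← Nat.pos_iff_ne_zero,
        Module.finrank_pos_iff_exists_ne_zero]
      exact ⟨⟨w, hLw⟩, fun h => hw (congrArg Subtype.val h)⟩
    have := hX (AffineSubspace.mk' p (LinearMap.ker L)) (hA ▸ ⟨p, hp⟩) hdim
    rwa [hA] at this

end Fibres

section Counting

variable {F M : Type*} [Field F] [AddCommGroup M] [Module F M]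
  {V : Type*} [DecidableEq V]

/-- Every edge of `S` lying in a fibre of `L` has a facet lying in one of the
permuted fibres. -/
theorem exists_facet_mem_fibre {l : ℕ} {G S : Finset (Finset V)}
    (hS : IsKDecompositionOf (l + 1) G S) (τ : V → F)
    {ordG : Finset V → Fin l → V}
    (hordG : ∀ g : Finset V, g.card = l → Finset.image (ordG g) Finset.univ = g)
    {ordS : Finset V → Fin (l + 1) → V}
    (hordS : ∀ e : Finset V, e.card = l + 1 → Finset.image (ordS e) Finset.univ = e)
    (L : (Fin (l + 1) → F) →ₗ[F] M) (t : Fin (l + 1)) (ht : L (Pi.single t 1) = 0)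
    (f : M) {e : Finset V} (he : e ∈ S) (hLe : L (τ ∘ ordS e) = f) :
    ∃ g ∈ G, g ⊆ e ∧ ∃ π : Equiv.Perm (Fin l), restrictPerm L t π (τ ∘ ordG g) = f := by
  have hinj := injective_of_image_univ_eq (hS.1 e he).1 (hordS e (hS.1 e he).1)
  have hinj' : Function.Injective (ordS e ∘ t.succAbove) :=
    hinj.comp Fin.succAbove_right_injective
  set g : Finset V := Finset.image (ordS e ∘ t.succAbove) Finset.univ with hg
  have hgcard : g.card = l := by
    rw [hg, Finset.card_image_of_injective _ hinj', Finset.card_univ, Fintype.card_fin]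
  have hge : g ⊆ e := by
    rw [← hordS e (hS.1 e he).1, hg]
    intro x hx
    obtain ⟨j, -, rfl⟩ := Finset.mem_image.mp hx
    exact Finset.mem_image_of_mem _ (Finset.mem_univ _)
  obtain ⟨π, hπ⟩ := exists_perm_comp_eq (injective_of_image_univ_eq hgcard (hordG g hgcard))
    hinj' (hordG g hgcard)
  refine ⟨g, (hS.1 e he).2 g hge hgcard, hge, π, ?_⟩
  rw [restrictPerm_apply, Function.comp_assoc, hπ,
    ← map_insertNth_eq L t ht (τ (ordS e t)), ← hLe]
  congr 1
  funext i
  refine t.succAboveCases ?_ (fun j => ?_) i <;> simp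

theorem ncard_edges_fibre_le [Fintype F] {l : ℕ} {G S : Finset (Finset V)}
    (hG : ∀ g ∈ G, g.card = l) (hS : IsKDecompositionOf (l + 1) G S)
    {τ : V → F} (hτ : Function.Injective τ)
    {ordG : Finset V → Fin l → V}
    (hordG : ∀ g : Finset V, g.card = l → Finset.image (ordG g) Finset.univ = g)
    {ordS : Finset V → Fin (l + 1) → V}
    (hordS : ∀ e : Finset V, e.card = l + 1 → Finset.image (ordS e) Finset.univ = e)
    (L : (Fin (l + 1) → F) →ₗ[F] M) (t : Fin (l + 1)) (ht : L (Pi.single t 1) = 0) (f : M) :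
    Set.ncard ((fun e => τ ∘ ordS e) '' (S : Set (Finset V)) ∩ L ⁻¹' {f}) ≤
      ∑ π : Equiv.Perm (Fin l), Set.ncard
        (restrictPerm L t π ⁻¹' {f} ∩ (fun g => τ ∘ ordG g) '' (G : Set (Finset V))) := by
  classical
  have hinjG : Set.InjOn (fun g => τ ∘ ordG g) (G : Set (Finset V)) := by
    intro g hg g' hg' h
    rw [← hordG g (hG g hg), ← hordG g' (hG g' hg'), hτ.comp_left h]
  have hkey := fun e (he : e ∈ S) => exists_facet_mem_fibre hS τ hordG hordS L t ht f he
  choose! φ hφG hφe hφ using hkey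
  have hle : Set.ncard ((fun e => τ ∘ ordS e) '' (S : Set (Finset V)) ∩ L ⁻¹' {f}) ≤
      (S.filter fun e => L (τ ∘ ordS e) = f).card := by
    have : (fun e => τ ∘ ordS e) '' (S : Set (Finset V)) ∩ L ⁻¹' {f} ⊆
        (fun e => τ ∘ ordS e) '' (S.filter fun e => L (τ ∘ ordS e) = f : Finset _) := by
      rintro _ ⟨⟨e, he, rfl⟩, hf⟩
      exact ⟨e, by simpa using ⟨he, hf⟩, rfl⟩
    refine (Set.ncard_le_ncard this (Set.toFinite _)).trans ?_
    refine (Set.ncard_image_le (Finset.finite_toSet _)).trans ?_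
    rw [Set.ncard_coe_finset]
  have hle' : (S.filter fun e => L (τ ∘ ordS e) = f).card ≤
      (Finset.univ.biUnion fun π : Equiv.Perm (Fin l) =>
        G.filter fun g => restrictPerm L t π (τ ∘ ordG g) = f).card := by
    refine Finset.card_le_card_of_injOn φ ?_ ?_
    · intro e he
      obtain ⟨heS, hef⟩ := Finset.mem_filter.mp he
      obtain ⟨π, hπ⟩ := hφ e heS hef
      exact Finset.mem_biUnion.mpr ⟨π, Finset.mem_univ _,
        Finset.mem_filter.mpr ⟨hφG e heS hef, hπ⟩⟩
    · intro e he e' he' h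
      obtain ⟨heS, hef⟩ := Finset.mem_filter.mp he
      obtain ⟨heS', hef'⟩ := Finset.mem_filter.mp he'
      exact (hS.2 (φ e) (hφG e heS hef)).unique ⟨heS, hφe e heS hef⟩
        ⟨heS', h ▸ hφe e' heS' hef'⟩
  refine hle.trans (hle'.trans (Finset.card_biUnion_le.trans (Finset.sum_le_sum fun π _ => ?_)))
  rw [← Set.ncard_coe_finset, ← Set.InjOn.ncard_image
    (hinjG.mono (Finset.coe_subset.mpr (Finset.filter_subset _ _)))]
  refine Set.ncard_le_ncard ?_ (Set.toFinite _)
  rintro _ ⟨g, hg, rfl⟩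
  obtain ⟨hgG, hgf⟩ := Finset.mem_filter.mp hg
  exact ⟨hgf, g, hgG, rfl⟩

/-- The number of edges in a fibre of a linear map that ignores two coordinates. -/
theorem ncard_edges_fibre_le_of_affineBounded [Fintype F] {l : ℕ} {G S : Finset (Finset V)}
    (hG : ∀ g ∈ G, g.card = l) (hS : IsKDecompositionOf (l + 1) G S)
    {τ : V → F} (hτ : Function.Injective τ)
    {ordG : Finset V → Fin l → V}
    (hordG : ∀ g : Finset V, g.card = l → Finset.image (ordG g) Finset.univ = g)
    {ordS : Finset V → Fin (l + 1) → V}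
    (hordS : ∀ e : Finset V, e.card = l + 1 → Finset.image (ordS e) Finset.univ = e)
    {C : ℝ} (hC : 0 ≤ C)
    (hB : AffineBounded F C ((fun g => τ ∘ ordG g) '' (G : Set (Finset V))))
    (L : (Fin (l + 1) → F) →ₗ[F] M) {s t : Fin (l + 1)} (hst : s ≠ t)
    (hs : L (Pi.single s 1) = 0) (ht : L (Pi.single t 1) = 0) (f : M) :
    (Set.ncard ((fun e => τ ∘ ordS e) '' (S : Set (Finset V)) ∩ L ⁻¹' {f}) : ℝ) ≤
      (l + 1).factorial * C * (S.card / (Fintype.card F : ℝ) ^ (l + 1)) *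
        Set.ncard (L ⁻¹' {f}) := by
  obtain ⟨s', rfl⟩ := Fin.exists_succAbove_eq hst
  have hq : (0 : ℝ) < Fintype.card F := by exact_mod_cast Fintype.card_pos
  have hGS : (Set.ncard ((fun g => τ ∘ ordG g) '' (G : Set (Finset V))) : ℝ) ≤
      (l + 1) * S.card := by
    have h := (Set.ncard_image_le (f := fun g => τ ∘ ordG g) G.finite_toSet).trans_eq
      (Set.ncard_coe_finset G)
    exact_mod_cast h.trans (hS.card_le (Nat.le_add_left 1 l) hG)
  have hterm : ∀ π : Equiv.Perm (Fin l), (Set.ncard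
      (restrictPerm L t π ⁻¹' {f} ∩ (fun g => τ ∘ ordG g) '' (G : Set (Finset V))) : ℝ) ≤
      (l + 1) * C * (S.card / (Fintype.card F : ℝ) ^ (l + 1)) * Set.ncard (L ⁻¹' {f}) := by
    intro π
    have hw : (Pi.single s' 1 : Fin l → F) ∘ π.symm ≠ 0 := fun h => by
      simpa using congrFun h (π s')
    have hLw : restrictPerm L t π ((Pi.single s' 1 : Fin l → F) ∘ π.symm) = 0 := by
      rw [restrictPerm_apply, ← hs]
      congr 1
      funext i
      refine t.succAboveCases ?_ (fun j => ?_) i <;> simp [Pi.single_apply]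
    refine (hB.ncard_fibre_le hC (restrictPerm L t π) hw hLw f).trans ?_
    rw [← Nat.card_coe_set_eq (L ⁻¹' {f}), card_fibre_eq L t ht π f, Fintype.card_fin,
      Nat.cast_mul, div_le_iff₀ (by positivity)]
    calc C * (Nat.card (restrictPerm L t π ⁻¹' {f})) *
          (Set.ncard ((fun g => τ ∘ ordG g) '' (G : Set (Finset V))))
        ≤ C * (Nat.card (restrictPerm L t π ⁻¹' {f})) * ((l + 1) * S.card) := by gcongr
      _ = _ := by field_simp; ring
  have hsum := ncard_edges_fibre_le hG hS hτ hordG hordS L t ht f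
  calc (Set.ncard ((fun e => τ ∘ ordS e) '' (S : Set (Finset V)) ∩ L ⁻¹' {f}) : ℝ)
      ≤ ∑ π : Equiv.Perm (Fin l), (Set.ncard (restrictPerm L t π ⁻¹' {f} ∩
          (fun g => τ ∘ ordG g) '' (G : Set (Finset V))) : ℝ) := by exact_mod_cast hsum
    _ ≤ ∑ _π : Equiv.Perm (Fin l), (l + 1) * C *
          (S.card / (Fintype.card F : ℝ) ^ (l + 1)) * Set.ncard (L ⁻¹' {f}) :=
        Finset.sum_le_sum fun π _ => hterm π
    _ = _ := by
        rw [Finset.sum_const, Finset.card_univ, Fintype.card_perm, Fintype.card_fin,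
          nsmul_eq_mul, Nat.factorial_succ]
        push_cast
        ring

end Counting

theorem Eop_inlMap_single {F : Type*} [Field F] {k : ℕ} {I : Finset (Fin k)} {s : Fin k}
    (hs : s ∈ I) : Eop F I (inlMap F k (Pi.single s 1)) = 0 := by
  funext i
  by_cases hi : i ∈ I
  · simp [Eop, inlMap, hi]
  · have : i ≠ s := fun h => hi (h ▸ hs)
    simp [Eop, inlMap, hi, this]

/-- The left part of an operator in `FO₂` ignores at least two coordinates. -/
theorem exists_leftPart_single_eq_zero {F : Type*} [Field F] {k : ℕ}
    {T : ((Fin k ⊕ Fin k) → F) →ₗ[F] (Fin (k - 1) → F)} (hT : T ∈ FO2 F k) :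
    ∃ s t : Fin k, s ≠ t ∧ leftPart T (Pi.single s 1) = 0 ∧
      leftPart T (Pi.single t 1) = 0 := by
  obtain ⟨i, J, I, -, hI, hIeven, rfl⟩ := hT
  have hcard : 1 < I.card := by
    have := hI.card_pos
    obtain ⟨r, hr⟩ := hIeven
    omega
  obtain ⟨s, hs, t, ht, hst⟩ := Finset.one_lt_card.mp hcard
  refine ⟨s, t, hst, ?_, ?_⟩ <;> simp [leftPart, Eop_inlMap_single, hs, ht]

/-- affine-boundedness carries over to `K_k`-decompositions:
if `τ(G)` is `C`-affine-bounded and `S` is a `K_k`-decomposition of `G`, then for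
every `f ∈ F^{k-1}` and every facet operator `T ∈ FO₂`,
`|τ(S) ∩ T₁⁻¹(f)| ≤ D·C·(|S|/n^k)·|T₁⁻¹(f)|`. -/
theorem stmt_7 (k : ℕ) (hk : 2 ≤ k) :
    ∃ D : ℝ, 0 < D ∧
      ∀ (n m : ℕ) (F : Type) [Field F] [Fintype F],
        ringChar F = 2 → Fintype.card F = 2 ^ m → 2 * n ≤ 2 ^ m → 2 ^ m ≤ 4 * n →
        ∀ τ : Fin n → F, Function.Injective τ → (∀ v, τ v ≠ 0) →
          ∀ C : ℝ, 0 < C →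
            ∀ G S : Finset (Finset (Fin n)), (∀ f ∈ G, f.card = k - 1) →
              IsKDecompositionOf k G S →
              ∀ ordG : Finset (Fin n) → Fin (k - 1) → Fin n,
                (∀ f : Finset (Fin n), f.card = k - 1 →
                    Finset.image (ordG f) Finset.univ = f) →
              ∀ ordS : Finset (Fin n) → Fin k → Fin n,
                (∀ e : Finset (Fin n), e.card = k →
                    Finset.image (ordS e) Finset.univ = e) →
              AffineBounded F C ((fun f => τ ∘ ordG f) '' (G : Set (Finset (Fin n)))) →
              ∀ (f : Fin (k - 1) → F)
                (T : ((Fin k ⊕ Fin k) → F) →ₗ[F] (Fin (k - 1) → F)), T ∈ FO2 F k →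
                (Set.ncard ((fun e => τ ∘ ordS e) '' (S : Set (Finset (Fin n))) ∩
                    leftPart T ⁻¹' {f}) : ℝ) ≤
                  D * C * ((S.card : ℝ) / (n : ℝ) ^ k) *
                    (Set.ncard (leftPart T ⁻¹' {f}) : ℝ) := by
  obtain ⟨l, rfl⟩ := Nat.exists_eq_add_of_le' (show 1 ≤ k by omega)
  refine ⟨((l + 1).factorial : ℝ), by exact_mod_cast Nat.factorial_pos _, ?_⟩
  intro n m F _ _ _ hcard hn hn' τ hτ _ C hC G S hG hS ordG hordG ordS hordS hB f T hT
  obtain ⟨s, t, hst, hs, ht⟩ := exists_leftPart_single_eq_zero hT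
  have hn0 : (0 : ℝ) < n := by
    have : 0 < 2 ^ m := by positivity
    exact_mod_cast (show 0 < n by omega)
  have hnF : (n : ℝ) ≤ Fintype.card F := by
    exact_mod_cast (show n ≤ Fintype.card F by omega)
  refine (ncard_edges_fibre_le_of_affineBounded (l := l) hG hS hτ hordG hordS hC.le hB (leftPart T)
    hst hs ht f).trans ?_
  gcongr
end

section
/- Let k ∈ {3,4} and let M = 2^{2k−1} − 2^k + 1. There exist ε₀ > 0 and c > 0 depending only on k such that for every ε ∈ (0, ε₀): if H ~ H_k(n; n^{−ε}) and π : [n] ↪ F* is a uniformly random injection independent of H, then with very high probability every edge x ∈ K_k^n satisfies |𝒜_x| ≥ c·n^{k − Mε}. -/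
open Finset

/-- The complete `k`-uniform hypergraph on `[n]`. -/
def allK (n k : ℕ) : Finset (Finset (Fin n)) :=
  Finset.univ.powersetCard k

open Classical in
/-- Probability of the event `E` when `H ~ H_k(n;p)` and `π : [n] ↪ F*` is an
independent uniformly random injection. -/
noncomputable def hypInjProb (n k : ℕ) (F : Type*) [Fintype F] [DecidableEq F] [Zero F]
    (p : ℝ) (E : Finset (Finset (Fin n)) → (Fin n → F) → Prop) : ℝ :=
  (∑ π ∈ (Finset.univ : Finset (Fin n → F)).filter
        (fun π => Function.Injective π ∧ ∀ v, π v ≠ 0),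
      ∑ H ∈ (allK n k).powerset,
        if E H π then p ^ H.card * (1 - p) ^ ((allK n k).card - H.card) else 0) /
    (((Finset.univ : Finset (Fin n → F)).filter
        (fun π => Function.Injective π ∧ ∀ v, π v ≠ 0)).card : ℝ)

/-- The `i`-th vertex of the edge `e_I` of the cross-polytope `C_{x,a}`. -/
def cpVert {V : Type*} {k : ℕ} (x a : Fin k → V) (I : Finset (Fin k)) (i : Fin k) : V :=
  if i ∈ I then a i else x i

/-- `a` (with the pairing `x_i ↔ a_i`) spans an absorber for `x`, relative to the
random injection `π` and the random hypergraph `H`: the vertices of `x`, `a` and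
of all associated cross-polytopes are distinct; all odd edges of `C_{x,a}` lie in
`H`; every nonempty even edge `e_I` of `C_{x,a}` is non-algebraic, has an
associated cross-polytope (witnessed by the algebraic vertices `b I`), all of
whose edges besides `e_I` itself lie in `H`. -/
def SpansAbsorber (n k : ℕ) (F : Type*) [Field F] (π : Fin n → F)
    (H : Finset (Finset (Fin n))) (x a : Fin k → Fin n) : Prop :=
  ∃ b : Finset (Fin k) → Fin k → Fin n,
    Function.Injective
      (Sum.elim x (Sum.elim a
        (fun p : {I : Finset (Fin k) // I.Nonempty ∧ Even I.card} × Fin k =>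
          b p.1.1 p.2))) ∧
    (∀ I : Finset (Fin k), Odd I.card →
      Finset.univ.image (cpVert x a I) ∈ H) ∧
    (∀ I : Finset (Fin k), I.Nonempty → Even I.card →
      (∑ j, π (cpVert x a I j) ≠ 0) ∧
      (∀ i, π (b I i) = π (cpVert x a I i) + ∑ j, π (cpVert x a I j)) ∧
      (∀ J : Finset (Fin k), J.Nonempty →
        Finset.univ.image (cpVert (cpVert x a I) (b I) J) ∈ H))

/-- `𝒜_x`: the number of edges `a ∈ K_k^n` spanning an absorber for the edge `x`. -/
noncomputable def absorberCount (n k : ℕ) (F : Type*) [Field F] (π : Fin n → F)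
    (H : Finset (Finset (Fin n))) (x : Finset (Fin n)) : ℕ :=
  Set.ncard {A : Finset (Fin n) | ∃ xv av : Fin k → Fin n,
    Finset.univ.image xv = x ∧ Finset.univ.image av = A ∧
    SpansAbsorber n k F π H xv av}

/-- Expectation of `f` at a random subset of `U` containing each element independently with
probability `p`. -/
noncomputable def binExp {α : Type*} (p : ℝ) (U : Finset α) (f : Finset α → ℝ) : ℝ :=
  ∑ S ∈ U.powerset, p ^ S.card * (1 - p) ^ (U.card - S.card) * f S

section BinExp

variable {α : Type*} {p : ℝ} {U : Finset α} {f g : Finset α → ℝ}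

lemma binExp_weight_nonneg (hp0 : 0 ≤ p) (hp1 : p ≤ 1) (S : Finset α) :
    0 ≤ p ^ S.card * (1 - p) ^ (U.card - S.card) :=
  mul_nonneg (pow_nonneg hp0 _) (pow_nonneg (sub_nonneg.2 hp1) _)

lemma binExp_mono (hp0 : 0 ≤ p) (hp1 : p ≤ 1) (h : ∀ S ⊆ U, f S ≤ g S) :
    binExp p U f ≤ binExp p U g :=
  Finset.sum_le_sum fun S hS =>
    mul_le_mul_of_nonneg_left (h S (mem_powerset.1 hS)) (binExp_weight_nonneg hp0 hp1 S)

lemma binExp_const_mul (c : ℝ) : binExp p U (fun S => c * f S) = c * binExp p U f := by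
  simp only [binExp, Finset.mul_sum]
  exact Finset.sum_congr rfl fun S _ => by ring

lemma binExp_sum {ι : Type*} (Y : Finset ι) (h : ι → Finset α → ℝ) :
    binExp p U (fun S => ∑ y ∈ Y, h y S) = ∑ y ∈ Y, binExp p U (h y) := by
  simp only [binExp, Finset.mul_sum]
  exact Finset.sum_comm

lemma binExp_one : binExp p U (fun _ => 1) = 1 := by
  have h := Finset.sum_pow_mul_eq_add_pow p (1 - p) U
  simp only [binExp, mul_one, h]
  simp

lemma binExp_insert [DecidableEq α] {u : α} (hu : u ∉ U) :
    binExp p (insert u U) f = binExp p U (fun S => (1 - p) * f S + p * f (insert u S)) := by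
  unfold binExp
  rw [Finset.sum_powerset_insert hu, ← Finset.sum_add_distrib]
  refine Finset.sum_congr rfl fun S hS => ?_
  have hSU := mem_powerset.1 hS
  have h1 : (insert u S).card = S.card + 1 := card_insert_of_notMem fun h => hu (hSU h)
  have h2 : (insert u U).card = U.card + 1 := card_insert_of_notMem hu
  have h3 := card_le_card hSU
  rw [h1, h2, Nat.add_sub_add_right, Nat.sub_add_comm h3]
  ring

/-- The probability that a binomial random subset contains a given set. -/
lemma binExp_superset [DecidableEq α] (U T : Finset α) (hT : T ⊆ U) :
    binExp p U (fun S => if T ⊆ S then 1 else 0) = p ^ T.card := by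
  induction U using Finset.induction_on generalizing T with
  | empty =>
    obtain rfl := subset_empty.1 hT
    simp [binExp]
  | insert u U hu ih =>
    rw [binExp_insert hu]
    by_cases huT : u ∈ T
    · have h1 : binExp p U (fun S => (1 - p) * (if T ⊆ S then 1 else 0)
          + p * (if T ⊆ insert u S then 1 else 0))
          = binExp p U (fun S => p * (if T.erase u ⊆ S then 1 else 0)) := by
        refine Finset.sum_congr rfl fun S hS => ?_
        have : ¬ T ⊆ S := fun h => hu (mem_powerset.1 hS (h huT))
        simp [this, Finset.subset_insert_iff]
      rw [h1, binExp_const_mul, ih _ (by rwa [← Finset.subset_insert_iff]), card_erase_of_mem huT]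
      have : 0 < T.card := card_pos.2 ⟨u, huT⟩
      rw [← pow_succ', Nat.sub_add_cancel this]
    · have hTU : T ⊆ U := (Finset.subset_insert_iff_of_notMem huT).1 hT
      rw [← ih T hTU]
      refine Finset.sum_congr rfl fun S hS => ?_
      simp only [Finset.subset_insert_iff_of_notMem huT]
      ring

end BinExp

lemma Real.exp_le_add_exp_sq (y : ℝ) : Real.exp y ≤ y + Real.exp (y ^ 2) := by
  have hsq := Real.add_one_le_exp (y ^ 2)
  rcases le_total |y| 1 with h | h
  · have := (abs_le.1 (Real.abs_exp_sub_one_sub_id_le h)).2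
    linarith
  · rcases le_total 0 y with h0 | h0
    · rw [abs_of_nonneg h0] at h
      have : Real.exp y ≤ Real.exp (y ^ 2) := Real.exp_le_exp.2 (by nlinarith)
      linarith
    · rw [abs_of_nonpos h0] at h
      have : Real.exp y ≤ 1 := Real.exp_le_one_iff.2 h0
      nlinarith

lemma two_point_exp_le {p : ℝ} (hp0 : 0 ≤ p) (hp1 : p ≤ 1) {a b c : ℝ} (h : |b - a| ≤ c) :
    (1 - p) * Real.exp a + p * Real.exp b ≤ Real.exp ((1 - p) * a + p * b + c ^ 2) := by
  set m := (1 - p) * a + p * b with hm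
  have key : ∀ t, |t - m| ≤ c → Real.exp t ≤ Real.exp m * ((t - m) + Real.exp (c ^ 2)) := by
    intro t ht
    have h1 := Real.exp_le_add_exp_sq (t - m)
    have h2 : Real.exp ((t - m) ^ 2) ≤ Real.exp (c ^ 2) :=
      Real.exp_le_exp.2 (sq_le_sq.2 (ht.trans (le_abs_self c)))
    have h3 : Real.exp t = Real.exp m * Real.exp (t - m) := by rw [← Real.exp_add]; congr 1; ring
    rw [h3]
    exact mul_le_mul_of_nonneg_left (by linarith) (Real.exp_pos m).le
  have ha : |a - m| ≤ c := by
    have : a - m = -(p * (b - a)) := by rw [hm]; ring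
    rw [this, abs_neg, abs_mul, abs_of_nonneg hp0]
    exact (mul_le_of_le_one_left (abs_nonneg _) hp1).trans h
  have hb : |b - m| ≤ c := by
    have : b - m = (1 - p) * (b - a) := by rw [hm]; ring
    rw [this, abs_mul, abs_of_nonneg (sub_nonneg.2 hp1)]
    exact (mul_le_of_le_one_left (abs_nonneg _) (by linarith)).trans h
  calc (1 - p) * Real.exp a + p * Real.exp b
      ≤ (1 - p) * (Real.exp m * ((a - m) + Real.exp (c ^ 2)))
        + p * (Real.exp m * ((b - m) + Real.exp (c ^ 2))) :=
        add_le_add (mul_le_mul_of_nonneg_left (key a ha) (sub_nonneg.2 hp1))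
          (mul_le_mul_of_nonneg_left (key b hb) hp0)
    _ = Real.exp m * Real.exp (c ^ 2)
        + Real.exp m * ((1 - p) * a + p * b - m) := by ring
    _ = Real.exp (m + c ^ 2) := by rw [← hm, Real.exp_add m, sub_self, mul_zero, add_zero]

/-- Bounded differences: the exponential moment of a function on a binomial random subset. -/
lemma binExp_exp_le {α : Type*} [DecidableEq α] {p : ℝ} (hp0 : 0 ≤ p) (hp1 : p ≤ 1)
    (c : α → ℝ) (U : Finset α) (f : Finset α → ℝ)
    (hf : ∀ u ∈ U, ∀ S ⊆ U, |f (insert u S) - f S| ≤ c u) :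
    binExp p U (fun S => Real.exp (f S)) ≤ Real.exp (binExp p U f + ∑ u ∈ U, c u ^ 2) := by
  induction U using Finset.induction_on generalizing f with
  | empty => simp [binExp]
  | insert u U hu ih =>
    rw [binExp_insert hu, binExp_insert hu, sum_insert hu]
    set g : Finset α → ℝ := fun S => (1 - p) * f S + p * f (insert u S) with hg
    have hsub : ∀ S ⊆ U, S ⊆ insert u U := fun S hS => hS.trans (subset_insert u U)
    have hgL : ∀ v ∈ U, ∀ S ⊆ U, |g (insert v S) - g S| ≤ c v := by
      intro v hv S hS
      have h1 := hf v (mem_insert_of_mem hv) S (hsub S hS)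
      have h2 := hf v (mem_insert_of_mem hv) (insert u S) (insert_subset_insert u hS)
      have : g (insert v S) - g S = (1 - p) * (f (insert v S) - f S)
          + p * (f (insert v (insert u S)) - f (insert u S)) := by
        simp only [hg, Finset.insert_comm u v]; ring
      rw [abs_le] at h1 h2 ⊢
      rw [this]
      constructor <;> nlinarith
    calc binExp p U (fun S => (1 - p) * Real.exp (f S) + p * Real.exp (f (insert u S)))
        ≤ binExp p U (fun S => Real.exp (c u ^ 2) * Real.exp (g S)) := by
          refine binExp_mono hp0 hp1 fun S hS => ?_
          rw [← Real.exp_add, add_comm (c u ^ 2)]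
          exact two_point_exp_le hp0 hp1 (hf u (mem_insert_self u U) S (hsub S hS))
      _ = Real.exp (c u ^ 2) * binExp p U (fun S => Real.exp (g S)) := binExp_const_mul _
      _ ≤ Real.exp (c u ^ 2) * Real.exp (binExp p U g + ∑ v ∈ U, c v ^ 2) :=
          mul_le_mul_of_nonneg_left (ih g hgL) (Real.exp_pos _).le
      _ = _ := by rw [← Real.exp_add]; congr 1; ring

/-- Lower tail for the number of members of a family `T` contained in a binomial random subset,
when the members have at most `M` elements and no element lies in more than `D` members. -/
lemma binExp_lower_tail {α β : Type*} [DecidableEq α] {p : ℝ} (hp0 : 0 ≤ p) (hp1 : p ≤ 1)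
    (U : Finset α) (Y : Finset β) (T : β → Finset α) (M : ℕ) (D L : ℝ) (hM : 0 < M) (hD : 0 < D)
    (hL : 0 < L) (hLY : L ≤ Y.card)
    (hTU : ∀ y ∈ Y, T y ⊆ U) (hTM : ∀ y ∈ Y, (T y).card ≤ M)
    (hTD : ∀ u ∈ U, ((Y.filter fun y => u ∈ T y).card : ℝ) ≤ D) :
    binExp p U (fun S => if ((Y.filter fun y => T y ⊆ S).card : ℝ) < L * p ^ M / 2 then 1 else 0)
      ≤ Real.exp (-(L * p ^ (2 * M) / (16 * D * M))) := by
  set N : Finset α → ℝ := fun S => ((Y.filter fun y => T y ⊆ S).card : ℝ) with hN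
  have hYpos : (0 : ℝ) < Y.card := hL.trans_le hLY
  have hMpos : (0 : ℝ) < M := Nat.cast_pos.2 hM
  set c : α → ℝ := fun u => ((Y.filter fun y => u ∈ T y).card : ℝ) with hc
  have hsum : ∑ u ∈ U, c u ≤ M * Y.card := by
    have h1 : ∑ u ∈ U, (Y.filter fun y => u ∈ T y).card
        = ∑ y ∈ Y, (U.filter fun u => u ∈ T y).card :=
      Finset.sum_card_bipartiteAbove_eq_sum_card_bipartiteBelow (fun u y => u ∈ T y)
    have h2 : ∑ y ∈ Y, (U.filter fun u => u ∈ T y).card ≤ ∑ y ∈ Y, M := by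
      refine Finset.sum_le_sum fun y hy => (card_le_card ?_).trans (hTM y hy)
      exact fun u hu => (mem_filter.1 hu).2
    rw [sum_const, smul_eq_mul, ← h1] at h2
    simp only [hc]
    rw [mul_comm]
    exact_mod_cast h2
  set V : ℝ := D * (M * Y.card) with hV
  have hVpos : 0 < V := by positivity
  have hsq : ∑ u ∈ U, c u ^ 2 ≤ V := by
    calc ∑ u ∈ U, c u ^ 2 ≤ ∑ u ∈ U, D * c u := by
          refine Finset.sum_le_sum fun u hu => ?_
          rw [sq]
          exact mul_le_mul_of_nonneg_right (hTD u hu) (Nat.cast_nonneg _)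
      _ = D * ∑ u ∈ U, c u := by rw [mul_sum]
      _ ≤ V := mul_le_mul_of_nonneg_left hsum hD.le
  have hmean : Y.card * p ^ M ≤ binExp p U N := by
    have h1 : N = fun S => ∑ y ∈ Y, if T y ⊆ S then (1 : ℝ) else 0 := by
      funext S; simp [hN]
    rw [h1, binExp_sum, ← nsmul_eq_mul]
    refine Finset.card_nsmul_le_sum _ _ _ fun y hy => ?_
    rw [binExp_superset U (T y) (hTU y hy)]
    exact pow_le_pow_of_le_one hp0 hp1 (hTM y hy)
  have hLip : ∀ u ∈ U, ∀ S ⊆ U, |N (insert u S) - N S| ≤ c u := by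
    classical
    intro u _ S _
    have h1 : N S ≤ N (insert u S) := by
      simp only [hN]
      exact_mod_cast card_le_card
        (monotone_filter_right Y fun y _ (h : T y ⊆ S) => h.trans (subset_insert u S))
    have h2 : N (insert u S) ≤ N S + c u := by
      simp only [hN, hc]
      norm_cast
      refine (card_le_card ?_).trans (card_union_le _ _)
      intro y hy
      simp only [mem_union, mem_filter] at hy ⊢
      by_cases hu : u ∈ T y
      · exact Or.inr ⟨hy.1, hu⟩
      · exact Or.inl ⟨hy.1, (subset_insert_iff_of_notMem hu).1 hy.2⟩
    rw [abs_of_nonneg (by linarith)]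
    linarith
  set t : ℝ := Y.card * p ^ M / 2 with ht
  set l : ℝ := t / (2 * V) with hl
  have htn : 0 ≤ t := by positivity
  have hln : 0 ≤ l := by positivity
  calc binExp p U (fun S => if N S < L * p ^ M / 2 then 1 else 0)
      ≤ binExp p U (fun S => Real.exp (l * t) * Real.exp (-l * N S)) := by
        refine binExp_mono hp0 hp1 fun S _ => ?_
        split_ifs with h
        · rw [← Real.exp_add]
          apply Real.one_le_exp
          have : N S ≤ t := h.le.trans (by rw [ht]; gcongr)
          nlinarith
        · positivity
    _ = Real.exp (l * t) * binExp p U (fun S => Real.exp (-l * N S)) := binExp_const_mul _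
    _ ≤ Real.exp (l * t) * Real.exp (binExp p U (fun S => -l * N S) + ∑ u ∈ U, (l * c u) ^ 2) := by
        refine mul_le_mul_of_nonneg_left (binExp_exp_le hp0 hp1 _ U _ ?_) (Real.exp_pos _).le
        intro u hu S hS
        rw [← mul_sub, abs_mul, abs_neg, abs_of_nonneg hln]
        exact mul_le_mul_of_nonneg_left (hLip u hu S hS) hln
    _ ≤ _ := by
        rw [← Real.exp_add, binExp_const_mul]
        apply Real.exp_le_exp.2
        have h1 : ∑ u ∈ U, (l * c u) ^ 2 ≤ l ^ 2 * V := by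
          simp only [mul_pow, ← mul_sum]
          exact mul_le_mul_of_nonneg_left hsq (sq_nonneg l)
        have h2 : l * (2 * t) ≤ l * binExp p U N :=
          mul_le_mul_of_nonneg_left (by rw [ht]; linarith) hln
        have h3 : l * t - l ^ 2 * V = t ^ 2 / (4 * V) := by
          rw [hl]; field_simp; ring
        have h4 : t ^ 2 / (4 * V) = Y.card * p ^ (2 * M) / (16 * D * M) := by
          rw [ht, hV]; field_simp; ring
        have h5 : L * p ^ (2 * M) / (16 * D * M) ≤ Y.card * p ^ (2 * M) / (16 * D * M) := by
          gcongr
        linarith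

/-- Indices of the vertices of an absorber outside the absorbed edge. -/
abbrev NewIx (k : ℕ) : Type :=
  Fin k ⊕ ({I : Finset (Fin k) // I.Nonempty ∧ Even I.card} × Fin k)

/-- Indices of all vertices of an absorber, with `none` standing for the zero of the field. -/
abbrev AbsIx (k : ℕ) : Type := Option (Fin k ⊕ NewIx k)

/-- The labels of the vertices of the absorber spanned by `y` for `z`. -/
def newLabel {F : Type*} [AddCommMonoid F] {k : ℕ} (z y : Fin k → F) : NewIx k → F :=
  Sum.elim y fun q => cpVert z y q.1.1 q.2 + ∑ j, cpVert z y q.1.1 j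

/-- The labels of all vertices of the absorber spanned by `y` for `z`, together with zero. -/
def absLabel {F : Type*} [AddCommMonoid F] {k : ℕ} (z y : Fin k → F) : AbsIx k → F :=
  fun s => s.elim 0 (Sum.elim z (newLabel z y))

/-- The coordinates of `y` occurring in the label of a vertex. -/
def yPart {k : ℕ} : AbsIx k → Finset (Fin k)
  | none => ∅
  | some (Sum.inl _) => ∅
  | some (Sum.inr (Sum.inl j)) => {j}
  | some (Sum.inr (Sum.inr q)) => q.1.1.erase q.2

/-- The coordinates of `z` occurring in the label of a vertex. -/
def zPart {k : ℕ} : AbsIx k → Finset (Fin k)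
  | none => ∅
  | some (Sum.inl j) => {j}
  | some (Sum.inr (Sum.inl _)) => ∅
  | some (Sum.inr (Sum.inr q)) => q.1.1ᶜ.erase q.2

section Labels

variable {F : Type*} [Field F] {k : ℕ}

lemma cpVert_add_sum [CharP F 2] (z y : Fin k → F) (I : Finset (Fin k)) (i : Fin k) :
    cpVert z y I i + ∑ j, cpVert z y I j = ∑ j ∈ I.erase i, y j + ∑ j ∈ Iᶜ.erase i, z j := by
  have h : ∑ j, cpVert z y I j = ∑ j ∈ I, y j + ∑ j ∈ Iᶜ, z j := by
    rw [← Finset.sum_add_sum_compl I]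
    congr 1
    · exact Finset.sum_congr rfl fun j hj => by simp [cpVert, hj]
    · exact Finset.sum_congr rfl fun j hj => by simp [cpVert, mem_compl.1 hj]
  rw [h]
  by_cases hi : i ∈ I
  · have hc : i ∉ Iᶜ := by simpa using hi
    rw [cpVert, if_pos hi, ← Finset.add_sum_erase I y hi, erase_eq_of_notMem hc, ← add_assoc,
      ← add_assoc, CharTwo.add_self_eq_zero, zero_add]
  · have hc : i ∈ Iᶜ := by simpa using hi
    rw [cpVert, if_neg hi, ← Finset.add_sum_erase Iᶜ z hc, erase_eq_of_notMem hi]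
    linear_combination CharTwo.add_self_eq_zero (z i)

lemma absLabel_eq [CharP F 2] (z y : Fin k → F) (s : AbsIx k) :
    absLabel z y s = ∑ j ∈ yPart s, y j + ∑ j ∈ zPart s, z j := by
  match s with
  | none => simp [absLabel, yPart, zPart]
  | some (Sum.inl j) => simp [absLabel, yPart, zPart]
  | some (Sum.inr (Sum.inl j)) => simp [absLabel, newLabel, yPart, zPart]
  | some (Sum.inr (Sum.inr q)) => exact cpVert_add_sum z y q.1.1 q.2

lemma yPart_inr_nonempty (s : NewIx k) : (yPart (some (Sum.inr s))).Nonempty := by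
  match s with
  | Sum.inl j => exact singleton_nonempty j
  | Sum.inr (⟨I, hI, hev⟩, i) =>
    change (I.erase i).Nonempty
    have h1 : 1 < I.card := by
      have := hI.card_pos
      obtain ⟨r, hr⟩ := hev
      omega
    exact (one_lt_card_iff_nontrivial.1 h1).erase_nonempty

lemma compl_erase_eq (I : Finset (Fin k)) (i : Fin k) :
    Iᶜ.erase i = (insert i (I.erase i))ᶜ := by
  ext j
  simp only [mem_erase, mem_compl, mem_insert]
  tauto

lemma sum_compl_erase (z : Fin k → F) (I : Finset (Fin k)) (i : Fin k) :
    ∑ j ∈ Iᶜ.erase i, z j = ∑ j, z j - ∑ j ∈ I.erase i, z j - z i := by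
  have h := Finset.sum_add_sum_compl (insert i (I.erase i)) z
  rw [sum_insert (notMem_erase i I)] at h
  rw [compl_erase_eq]
  linear_combination h

lemma eq_of_erase_eq_of_even {I I' : Finset (Fin k)} {i : Fin k} (hI : Even I.card)
    (hI' : Even I'.card) (h : I.erase i = I'.erase i) : I = I' := by
  have hc := congrArg card h
  by_cases h1 : i ∈ I <;> by_cases h2 : i ∈ I'
  · rw [← insert_erase h1, h, insert_erase h2]
  · rw [card_erase_of_mem h1, erase_eq_of_notMem h2] at hc
    have := card_pos.2 ⟨i, h1⟩
    obtain ⟨r, hr⟩ := hI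
    obtain ⟨r', hr'⟩ := hI'
    omega
  · rw [card_erase_of_mem h2, erase_eq_of_notMem h1] at hc
    have := card_pos.2 ⟨i, h2⟩
    obtain ⟨r, hr⟩ := hI
    obtain ⟨r', hr'⟩ := hI'
    omega
  · rwa [erase_eq_of_notMem h1, erase_eq_of_notMem h2] at h

lemma sum_ne_zero_of_card [CharP F 2] {z : Fin k → F} (hz : Function.Injective z)
    (hz0 : ∀ j, z j ≠ 0) {B : Finset (Fin k)} (hB : B.card = 1 ∨ B.card = 2) :
    ∑ j ∈ B, z j ≠ 0 := by
  rcases hB with hB | hB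
  · obtain ⟨j, rfl⟩ := card_eq_one.1 hB
    simpa using hz0 j
  · obtain ⟨i, j, hij, rfl⟩ := card_eq_two.1 hB
    rw [sum_pair hij, Ne, CharTwo.add_eq_zero]
    exact fun h => hij (hz h)

/-- Distinct vertices of an absorber have distinct labels as affine forms in `y`. -/
lemma zPart_sum_ne [CharP F 2] (hk : k = 3 ∨ k = 4) {z : Fin k → F} (hz : Function.Injective z)
    (hz0 : ∀ j, z j ≠ 0) {s s' : AbsIx k} (hs : s ≠ s') (h : yPart s = yPart s') :
    ∑ j ∈ zPart s, z j ≠ ∑ j ∈ zPart s', z j := by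
  have hmixed : ∀ (j : Fin k) (q : {I : Finset (Fin k) // I.Nonempty ∧ Even I.card} × Fin k),
      {j} = q.1.1.erase q.2 → ∑ l ∈ q.1.1ᶜ.erase q.2, z l ≠ 0 := by
    intro j q hq
    refine sum_ne_zero_of_card hz hz0 ?_
    have hni : q.2 ∉ ({j} : Finset (Fin k)) := hq ▸ notMem_erase _ _
    rw [compl_erase_eq, ← hq, card_compl, card_insert_of_notMem hni, card_singleton,
      Fintype.card_fin]
    omega
  match s, s' with
  | none, none => exact absurd rfl hs
  | none, some (Sum.inl j) => simpa [zPart] using (hz0 j).symm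
  | some (Sum.inl j), none => simpa [zPart] using hz0 j
  | some (Sum.inl i), some (Sum.inl j) =>
    have hij : i ≠ j := fun hij => hs (by rw [hij])
    simpa [zPart] using fun h => hij (hz h)
  | none, some (Sum.inr t) => exact absurd h.symm (yPart_inr_nonempty t).ne_empty
  | some (Sum.inr t), none => exact absurd h (yPart_inr_nonempty t).ne_empty
  | some (Sum.inl _), some (Sum.inr t) => exact absurd h.symm (yPart_inr_nonempty t).ne_empty
  | some (Sum.inr t), some (Sum.inl _) => exact absurd h (yPart_inr_nonempty t).ne_empty
  | some (Sum.inr (Sum.inl i)), some (Sum.inr (Sum.inl j)) =>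
    exact absurd (by rw [singleton_injective h]) hs
  | some (Sum.inr (Sum.inl j)), some (Sum.inr (Sum.inr q)) => exact (hmixed j q h).symm
  | some (Sum.inr (Sum.inr q)), some (Sum.inr (Sum.inl j)) => exact hmixed j q h.symm
  | some (Sum.inr (Sum.inr (⟨I, hI⟩, i))), some (Sum.inr (Sum.inr (⟨I', hI'⟩, i'))) =>
    change I.erase i = I'.erase i' at h
    change ∑ j ∈ Iᶜ.erase i, z j ≠ ∑ j ∈ I'ᶜ.erase i', z j
    rw [sum_compl_erase, sum_compl_erase, h]
    intro heq
    have hi : i = i' := hz (sub_right_injective heq)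
    subst hi
    obtain rfl := eq_of_erase_eq_of_even hI.2 hI'.2 h
    exact hs rfl

end Labels

/-- The solutions of a nondegenerate affine equation. -/
lemma card_affine_eq_le {F : Type*} [Field F] [Fintype F] [DecidableEq F] {k : ℕ}
    {A A' : Finset (Fin k)} (h : A ≠ A') (w w' : F) :
    (univ.filter fun y : Fin k → F => ∑ j ∈ A, y j + w = ∑ j ∈ A', y j + w').card
      ≤ Fintype.card F ^ (k - 1) := by
  wlog hA : ∃ j ∈ A, j ∉ A' generalizing A A' w w'
  · have hA' : ∃ j ∈ A', j ∉ A := by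
      by_contra! hc
      push Not at hA
      exact h (Subset.antisymm hA hc)
    simpa only [eq_comm] using this h.symm w' w hA'
  obtain ⟨j, hjA, hjA'⟩ := hA
  have hcard : Fintype.card ({i : Fin k // i ≠ j} → F) = Fintype.card F ^ (k - 1) := by
    simp [Fintype.card_subtype_compl]
  rw [← hcard, ← Finset.card_univ]
  refine Finset.card_le_card_of_injOn (fun y i => y i.1) (fun _ _ => mem_univ _) ?_
  intro y hy y' hy' hyy
  simp only [coe_filter, mem_univ, true_and, Set.mem_ofPred_eq] at hy hy'
  have hoff : ∀ i, i ≠ j → y i = y' i := fun i hi => congrFun hyy ⟨i, hi⟩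
  have h1 : ∑ i ∈ A.erase j, y i = ∑ i ∈ A.erase j, y' i :=
    Finset.sum_congr rfl fun i hi => hoff i (ne_of_mem_erase hi)
  have h2 : ∑ i ∈ A', y i = ∑ i ∈ A', y' i :=
    Finset.sum_congr rfl fun i hi => hoff i fun hij => hjA' (hij ▸ hi)
  rw [← Finset.add_sum_erase A _ hjA] at hy hy'
  funext i
  by_cases hi : i = j
  · subst hi
    linear_combination hy - hy' - h1 + h2
  · exact hoff i hi

section Generic

variable {F : Type*} [Field F] [Fintype F] [DecidableEq F] [CharP F 2] {k : ℕ}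

lemma card_newLabel_eq_le (z : Fin k → F) (s : NewIx k) (u : F) :
    (univ.filter fun y : Fin k → F => newLabel z y s = u).card ≤ Fintype.card F ^ (k - 1) := by
  refine le_of_eq_of_le (congrArg card (filter_congr fun y _ => ?_))
    (card_affine_eq_le (yPart_inr_nonempty s).ne_empty
      (∑ j ∈ zPart (some (Sum.inr s)), z j) u)
  rw [← absLabel_eq z y (some (Sum.inr s)), sum_empty, zero_add]
  rfl

lemma card_absLabel_eq_le (hk : k = 3 ∨ k = 4) {z : Fin k → F} (hz : Function.Injective z)
    (hz0 : ∀ j, z j ≠ 0) {s s' : AbsIx k} (hs : s ≠ s') :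
    (univ.filter fun y : Fin k → F => absLabel z y s = absLabel z y s').card
      ≤ Fintype.card F ^ (k - 1) := by
  by_cases h : yPart s = yPart s'
  · rw [filter_false_of_mem]
    · simp
    · intro y _ heq
      rw [absLabel_eq, absLabel_eq, h] at heq
      exact zPart_sum_ne hk hz hz0 hs h (add_left_cancel heq)
  · simp only [absLabel_eq]
    exact card_affine_eq_le h _ _

/-- For all but a vanishing proportion of `y`, the vertex labels are distinct and nonzero. -/
lemma card_not_injective_absLabel_le (hk : k = 3 ∨ k = 4) {z : Fin k → F}
    (hz : Function.Injective z) (hz0 : ∀ j, z j ≠ 0) :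
    (univ.filter fun y : Fin k → F => ¬ Function.Injective (absLabel z y)).card
      ≤ Fintype.card (AbsIx k) ^ 2 * Fintype.card F ^ (k - 1) := by
  have hsub : (univ.filter fun y : Fin k → F => ¬ Function.Injective (absLabel z y))
      ⊆ (univ.filter fun r : AbsIx k × AbsIx k => r.1 ≠ r.2).biUnion fun r =>
        univ.filter fun y : Fin k → F => absLabel z y r.1 = absLabel z y r.2 := by
    intro y hy
    have hy' := (mem_filter.1 hy).2
    simp only [Function.Injective, not_forall] at hy'
    obtain ⟨s, s', heq, hne⟩ := hy'
    simp only [mem_biUnion, mem_filter, mem_univ, true_and]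
    exact ⟨(s, s'), hne, heq⟩
  refine (card_le_card hsub).trans ((card_biUnion_le_card_mul _ _ _ fun r hr =>
    card_absLabel_eq_le hk hz hz0 (mem_filter.1 hr).2).trans (Nat.mul_le_mul_right _ ?_))
  refine (card_filter_le _ _).trans ?_
  rw [card_univ, Fintype.card_prod, sq]

lemma half_le_card_injective_absLabel (hk : k = 3 ∨ k = 4) {z : Fin k → F}
    (hz : Function.Injective z) (hz0 : ∀ j, z j ≠ 0)
    (hq : 2 * Fintype.card (AbsIx k) ^ 2 ≤ Fintype.card F) :
    (Fintype.card F : ℝ) ^ k / 2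
      ≤ (univ.filter fun y : Fin k → F => Function.Injective (absLabel z y)).card := by
  have h1 := card_not_injective_absLabel_le hk hz hz0
  have h2 := card_filter_add_card_filter_not (s := (univ : Finset (Fin k → F)))
    (fun y => Function.Injective (absLabel z y))
  have h3 : Fintype.card F ^ k = Fintype.card F * Fintype.card F ^ (k - 1) := by
    rw [← pow_succ', Nat.sub_add_cancel (by omega)]
  have h4 := Nat.mul_le_mul_right (Fintype.card F ^ (k - 1)) hq
  rw [card_univ, Fintype.card_fun, Fintype.card_fin] at h2
  have h5 : Fintype.card F ^ k
      ≤ 2 * (univ.filter fun y : Fin k → F => Function.Injective (absLabel z y)).card := by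
    nlinarith
  have h6 : (Fintype.card F : ℝ) ^ k
      ≤ 2 * (univ.filter fun y : Fin k → F => Function.Injective (absLabel z y)).card := by
    exact_mod_cast h5
  linarith

end Generic

section RandomInjection

lemma choose_mul_pow_le_mode {N n j : ℕ} (hn : n ≤ N) (hj : j ≤ N) :
    N.choose j * n ^ j * (N - n) ^ (N - j) ≤ N.choose n * n ^ n * (N - n) ^ (N - n) := by
  set a : ℕ → ℕ := fun j => N.choose j * n ^ j * (N - n) ^ (N - j) with ha
  have hstep : ∀ j < N, ∃ X, a j = X * (N - n) ∧ a (j + 1) * (j + 1) = X * ((N - j) * n) := by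
    intro j hj
    refine ⟨N.choose j * n ^ j * (N - n) ^ (N - (j + 1)), ?_, ?_⟩
    · simp only [ha]
      rw [mul_assoc (N.choose j * n ^ j), ← pow_succ]
      congr 2
      omega
    · simp only [ha]
      calc N.choose (j + 1) * n ^ (j + 1) * (N - n) ^ (N - (j + 1)) * (j + 1)
          = (N.choose (j + 1) * (j + 1)) * (n ^ (j + 1) * (N - n) ^ (N - (j + 1))) := by ring
        _ = _ := by rw [Nat.choose_succ_right_eq]; ring
  have hup : ∀ j < n, a j ≤ a (j + 1) := by
    intro j hjn
    obtain ⟨X, h1, h2⟩ := hstep j (by omega)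
    refine Nat.le_of_mul_le_mul_right ?_ (Nat.succ_pos j)
    rw [Nat.succ_eq_add_one, h2, h1, mul_assoc]
    exact Nat.mul_le_mul_left _ (Nat.mul_le_mul (by omega) hjn)
  have hdown : ∀ j, n ≤ j → j < N → a (j + 1) ≤ a j := by
    intro j hnj hjN
    obtain ⟨X, h1, h2⟩ := hstep j hjN
    refine Nat.le_of_mul_le_mul_right ?_ (Nat.succ_pos j)
    rw [Nat.succ_eq_add_one, h2, h1, mul_assoc]
    exact Nat.mul_le_mul_left _ (Nat.mul_le_mul (by omega) (by omega))
  change a j ≤ a n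
  rcases le_total j n with h | h
  · induction h using Nat.decreasingInduction with
    | self => exact le_rfl
    | of_succ i hi ih => exact (hup i hi).trans (ih (by omega))
  · induction j, h using Nat.le_induction with
    | base => exact le_rfl
    | succ i hi ih => exact (hdown i hi (by omega)).trans (ih (by omega))

lemma one_le_binomial_mode {N n : ℕ} (hN : 0 < N) (hn : n ≤ N) :
    (1 : ℝ) ≤ (N + 1) * (N.choose n * ((n / N : ℝ) ^ n * (1 - (n / N : ℝ)) ^ (N - n))) := by
  have hsum : N ^ N ≤ (N + 1) * (N.choose n * n ^ n * (N - n) ^ (N - n)) := by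
    calc N ^ N = (n + (N - n)) ^ N := by rw [Nat.add_sub_cancel' hn]
      _ = ∑ j ∈ range (N + 1), n ^ j * (N - n) ^ (N - j) * N.choose j := add_pow _ _ _
      _ ≤ ∑ j ∈ range (N + 1), N.choose n * n ^ n * (N - n) ^ (N - n) := by
        refine Finset.sum_le_sum fun j hj => ?_
        refine le_trans (le_of_eq ?_) (choose_mul_pow_le_mode hn (Nat.lt_succ_iff.1 (mem_range.1 hj)))
        ring
      _ = _ := by simp
  have hN' : (0 : ℝ) < N := Nat.cast_pos.2 hN
  have h1 : (1 - (n / N : ℝ)) = ((N - n : ℕ) : ℝ) / N := by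
    rw [Nat.cast_sub hn]; field_simp
  have h2 : (N : ℝ) ^ n * (N : ℝ) ^ (N - n) = (N : ℝ) ^ N := by
    rw [← pow_add, Nat.add_sub_cancel' hn]
  have h3 : ((N : ℝ) + 1) * (N.choose n * ((n / N : ℝ) ^ n * (1 - (n / N : ℝ)) ^ (N - n)))
      = (((N + 1) * (N.choose n * n ^ n * (N - n) ^ (N - n)) : ℕ) : ℝ) / (N : ℝ) ^ N := by
    rw [h1, div_pow, div_pow, ← h2]
    push_cast
    field_simp
  rw [h3, one_le_div (by positivity)]
  exact_mod_cast hsum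

variable {F : Type*} [Fintype F] [DecidableEq F]

lemma card_injective_into (n : ℕ) (S : Finset F) :
    (univ.filter fun π : Fin n → F => Function.Injective π ∧ ∀ v, π v ∈ S).card
      = S.card.descFactorial n := by
  have h := Fintype.card_embedding_eq (α := Fin n) (β := S)
  rw [Fintype.card_coe, Fintype.card_fin] at h
  rw [← h, ← Finset.card_univ]
  refine (Finset.card_bij (fun e _ v => ((e : Fin n ↪ S) v : F)) ?_ ?_ ?_).symm
  · intro e _
    simp only [mem_filter, mem_univ, true_and]
    exact ⟨Subtype.val_injective.comp e.injective, fun v => (e v).2⟩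
  · intro e _ e' _ hee
    ext v
    exact congrFun hee v
  · intro π hπ
    obtain ⟨hinj, hS⟩ := (mem_filter.1 hπ).2
    exact ⟨⟨fun v => ⟨π v, hS v⟩, fun v w hvw => hinj (congrArg Subtype.val hvw)⟩, mem_univ _, rfl⟩

open Classical in
/-- Transfer from a binomial random subset to the image of a uniformly random injection. -/
lemma card_injective_image_le (n : ℕ) (U : Finset F) (hU : 0 < U.card) (hn : n ≤ U.card)
    (B : Finset F → Prop) :
    ((univ.filter fun π : Fin n → F =>
        (Function.Injective π ∧ ∀ v, π v ∈ U) ∧ B (univ.image π)).card : ℝ)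
      ≤ (U.card.descFactorial n : ℝ) * ((U.card + 1) *
        binExp (n / U.card : ℝ) U (fun S => if B S then 1 else 0)) := by
  set N := U.card with hN
  set p : ℝ := n / N with hp
  set w : ℝ := p ^ n * (1 - p) ^ (N - n) with hw
  have hN' : (0 : ℝ) < N := Nat.cast_pos.2 hU
  have hp0 : 0 ≤ p := by positivity
  have hp1 : p ≤ 1 := by
    rw [hp, div_le_one hN']
    exact_mod_cast hn
  set bad := (U.powersetCard n).filter B with hbad
  have h1 : (univ.filter fun π : Fin n → F =>
      (Function.Injective π ∧ ∀ v, π v ∈ U) ∧ B (univ.image π)).card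
        ≤ n.factorial * bad.card := by
    refine Finset.card_le_mul_card_image_of_maps_to (f := fun π => univ.image π) ?_ _ ?_
    · intro π hπ
      obtain ⟨⟨hinj, hπU⟩, hB⟩ := (mem_filter.1 hπ).2
      refine mem_filter.2 ⟨mem_powersetCard.2 ⟨?_, ?_⟩, hB⟩
      · intro u hu
        obtain ⟨v, _, rfl⟩ := mem_image.1 hu
        exact hπU v
      · rw [card_image_of_injective _ hinj, card_univ, Fintype.card_fin]
    · intro S hS
      have hSc : S.card = n := (mem_powersetCard.1 (mem_filter.1 hS).1).2
      have := card_injective_into n S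
      rw [hSc, Nat.descFactorial_self] at this
      rw [← this]
      refine card_le_card fun π hπ => ?_
      obtain ⟨hπ1, rfl⟩ := mem_filter.1 hπ
      exact mem_filter.2 ⟨mem_univ _, (mem_filter.1 hπ1).2.1.1,
        fun v => mem_image_of_mem _ (mem_univ v)⟩
  have h2 : (bad.card : ℝ) * w ≤ binExp p U (fun S => if B S then 1 else 0) := by
    have : (bad.card : ℝ) * w = ∑ S ∈ bad, p ^ S.card * (1 - p) ^ (U.card - S.card) *
        (if B S then 1 else 0) := by
      rw [← nsmul_eq_mul, ← sum_const]
      refine Finset.sum_congr rfl fun S hS => ?_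
      obtain ⟨hS1, hS2⟩ := mem_filter.1 hS
      rw [if_pos hS2, (mem_powersetCard.1 hS1).2, mul_one]
    rw [this]
    refine Finset.sum_le_sum_of_subset_of_nonneg ?_ ?_
    · intro S hS
      exact mem_powerset.2 (mem_powersetCard.1 (mem_filter.1 hS).1).1
    · intro S _ _
      exact mul_nonneg (binExp_weight_nonneg hp0 hp1 S) (by split_ifs <;> norm_num)
  have h3 := one_le_binomial_mode hU hn
  rw [← hp, ← hw] at h3
  have h4 : (N.descFactorial n : ℝ) = n.factorial * N.choose n := by
    exact_mod_cast Nat.descFactorial_eq_factorial_mul_choose N n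
  have hw0 : 0 ≤ w := mul_nonneg (pow_nonneg hp0 _) (pow_nonneg (sub_nonneg.2 hp1) _)
  calc _ ≤ (n.factorial : ℝ) * bad.card := by exact_mod_cast h1
    _ = n.factorial * bad.card * 1 := (mul_one _).symm
    _ ≤ n.factorial * bad.card * ((N + 1) * (N.choose n * w)) := by gcongr
    _ = n.factorial * N.choose n * ((N + 1) * (bad.card * w)) := by ring
    _ ≤ _ := by rw [h4]; gcongr

end RandomInjection

lemma newLabel_ne_zero {F : Type*} [Field F] {k : ℕ} {z y : Fin k → F}
    (h : Function.Injective (absLabel z y)) (s : NewIx k) :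
    newLabel z y s ≠ 0 := fun hs =>
  absurd (@h (some (Sum.inr s)) none hs) (by simp)


section RichSubset

variable {F : Type*} [Field F] [Fintype F] [DecidableEq F] {k : ℕ}

/-- The tuples `y` for which all vertex labels of the absorber of `z` are distinct and nonzero, and
those outside `z` lie in `S`. -/
def absTuples (S : Finset F) (z : Fin k → F) : Finset (Fin k → F) :=
  univ.filter fun y => Function.Injective (absLabel z y) ∧ ∀ s, newLabel z y s ∈ S

/-- Every `z` has at least `L` potential absorbers with labels in `S`. -/
def AbsRich (k : ℕ) (S : Finset F) (L : ℝ) : Prop :=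
  ∀ z : Fin k → F, Function.Injective z → (∀ j, z j ≠ 0) → L ≤ (absTuples S z).card

lemma card_newIx_pos (hk : k = 3 ∨ k = 4) : 0 < Fintype.card (NewIx k) :=
  Fintype.card_pos_iff.2 ⟨Sum.inl ⟨0, by omega⟩⟩

lemma binExp_absTuples_lt [CharP F 2] (hk : k = 3 ∨ k = 4) {p : ℝ} (hp0 : 0 ≤ p) (hp1 : p ≤ 1)
    (hq : 2 * Fintype.card (AbsIx k) ^ 2 ≤ Fintype.card F)
    {z : Fin k → F} (hz : Function.Injective z) (hz0 : ∀ j, z j ≠ 0) :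
    binExp p (univ.erase (0 : F)) (fun S => if ((absTuples S z).card : ℝ)
        < (Fintype.card F : ℝ) ^ k / 2 * p ^ Fintype.card (NewIx k) / 2 then 1 else 0)
      ≤ Real.exp (-(Fintype.card F * p ^ (2 * Fintype.card (NewIx k))
          / (32 * (Fintype.card (NewIx k) : ℝ) ^ 2))) := by
  have hM := card_newIx_pos hk
  have hM' : (0 : ℝ) < Fintype.card (NewIx k) := Nat.cast_pos.2 hM
  have hq0 : (0 : ℝ) < Fintype.card F := Nat.cast_pos.2 Fintype.card_pos
  have h := binExp_lower_tail hp0 hp1 (univ.erase (0 : F))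
    (univ.filter fun y : Fin k → F => Function.Injective (absLabel z y))
    (fun y => univ.image (newLabel z y)) (Fintype.card (NewIx k))
    (Fintype.card (NewIx k) * (Fintype.card F : ℝ) ^ (k - 1)) ((Fintype.card F : ℝ) ^ k / 2) hM
    (by positivity) (by positivity) (half_le_card_injective_absLabel hk hz hz0 hq) ?_ ?_ ?_
  · have hfil : ∀ S : Finset F, ((univ.filter fun y : Fin k → F =>
        Function.Injective (absLabel z y)).filter fun y => univ.image (newLabel z y) ⊆ S)
        = absTuples S z := by
      intro S
      rw [filter_filter]
      refine filter_congr fun y _ => and_congr_right fun _ => ?_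
      simp [image_subset_iff]
    simp only [hfil] at h
    refine h.trans (Real.exp_le_exp.2 (neg_le_neg (le_of_eq ?_)))
    have h3 : (Fintype.card F : ℝ) ^ k = Fintype.card F * (Fintype.card F : ℝ) ^ (k - 1) := by
      rw [← pow_succ', Nat.sub_add_cancel (by omega)]
    rw [h3]
    field_simp
    ring
  · intro y hy u hu
    obtain ⟨s, _, rfl⟩ := mem_image.1 hu
    exact mem_erase.2 ⟨newLabel_ne_zero (mem_filter.1 hy).2 s, mem_univ _⟩
  · exact fun y _ => card_image_le
  · intro u _
    have hsub : ((univ.filter fun y : Fin k → F => Function.Injective (absLabel z y)).filter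
        fun y => u ∈ univ.image (newLabel z y))
        ⊆ (univ : Finset (NewIx k)).biUnion fun s =>
          univ.filter fun y : Fin k → F => newLabel z y s = u := by
      intro y hy
      obtain ⟨s, _, hs⟩ := mem_image.1 (mem_filter.1 hy).2
      exact mem_biUnion.2 ⟨s, mem_univ s, mem_filter.2 ⟨mem_univ y, hs⟩⟩
    exact_mod_cast (card_le_card hsub).trans
      (card_biUnion_le_card_mul _ _ _ fun s _ => card_newLabel_eq_le z s u)

open Classical in
lemma binExp_not_absRich [CharP F 2] (hk : k = 3 ∨ k = 4) {p : ℝ} (hp0 : 1 / 4 ≤ p) (hp1 : p ≤ 1)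
    (hq : 2 * Fintype.card (AbsIx k) ^ 2 ≤ Fintype.card F) :
    binExp p (univ.erase (0 : F)) (fun S => if ¬ AbsRich k S
        ((Fintype.card F : ℝ) ^ k * ((1 / 4) ^ Fintype.card (NewIx k) / 4)) then 1 else 0)
      ≤ (Fintype.card F : ℝ) ^ k * Real.exp (-(Fintype.card F *
          ((1 / 4) ^ (2 * Fintype.card (NewIx k)) / (32 * (Fintype.card (NewIx k) : ℝ) ^ 2)))) := by
  have hM' : (0 : ℝ) < Fintype.card (NewIx k) := Nat.cast_pos.2 (card_newIx_pos hk)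
  have hp : 0 ≤ p := by linarith
  set Z := univ.filter fun z : Fin k → F => Function.Injective z ∧ ∀ j, z j ≠ 0 with hZ
  have hZc : (Z.card : ℝ) ≤ (Fintype.card F : ℝ) ^ k := by
    have := card_le_univ Z
    rw [Fintype.card_fun, Fintype.card_fin] at this
    exact_mod_cast this
  calc _ ≤ binExp p (univ.erase (0 : F)) (fun S => ∑ z ∈ Z, if ((absTuples S z).card : ℝ)
        < (Fintype.card F : ℝ) ^ k / 2 * p ^ Fintype.card (NewIx k) / 2 then 1 else 0) := by
        refine binExp_mono hp hp1 fun S _ => ?_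
        split_ifs with h
        · exact Finset.sum_nonneg fun z _ => by split_ifs <;> norm_num
        · simp only [AbsRich, not_forall, not_le] at h
          obtain ⟨z, hz, hz0, hlt⟩ := h
          refine le_trans (le_of_eq ?_) (Finset.single_le_sum (fun z _ => ?_)
            (mem_filter.2 ⟨mem_univ z, hz, hz0⟩))
          · refine (if_pos (hlt.trans_le ?_)).symm
            have : ((1 : ℝ) / 4) ^ Fintype.card (NewIx k) ≤ p ^ Fintype.card (NewIx k) := by gcongr
            have h0 : (0 : ℝ) ≤ (Fintype.card F : ℝ) ^ k := by positivity
            nlinarith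
          · split_ifs <;> norm_num
    _ = ∑ z ∈ Z, _ := binExp_sum Z _
    _ ≤ ∑ _z ∈ Z, Real.exp (-(Fintype.card F * p ^ (2 * Fintype.card (NewIx k))
          / (32 * (Fintype.card (NewIx k) : ℝ) ^ 2))) :=
        Finset.sum_le_sum fun z hz =>
          binExp_absTuples_lt hk hp hp1 hq (mem_filter.1 hz).2.1 (mem_filter.1 hz).2.2
    _ ≤ _ := by
        rw [sum_const, nsmul_eq_mul]
        refine mul_le_mul hZc (Real.exp_le_exp.2 (neg_le_neg ?_)) (Real.exp_pos _).le (by positivity)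
        rw [mul_div_assoc]
        gcongr

end RichSubset

section Absorbers

variable {n k : ℕ}

/-- The edges of the absorber spanned by `a` for `x`, with associated cross-polytopes given
by `b`. -/
def absEdges (x a : Fin k → Fin n) (b : Finset (Fin k) → Fin k → Fin n) :
    Finset (Finset (Fin n)) :=
  (univ.filter fun I : Finset (Fin k) => Odd I.card).image
      (fun I => univ.image (cpVert x a I)) ∪
    ((univ.filter fun I : Finset (Fin k) => I.Nonempty ∧ Even I.card) ×ˢ
      (univ.filter fun J : Finset (Fin k) => J.Nonempty)).image
      (fun r => univ.image (cpVert (cpVert x a r.1) (b r.1) r.2))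

lemma mem_absEdges {x a : Fin k → Fin n} {b : Finset (Fin k) → Fin k → Fin n}
    {e : Finset (Fin n)} : e ∈ absEdges x a b ↔
      (∃ I : Finset (Fin k), Odd I.card ∧ univ.image (cpVert x a I) = e) ∨
      ∃ I J : Finset (Fin k), (I.Nonempty ∧ Even I.card) ∧ J.Nonempty ∧
        univ.image (cpVert (cpVert x a I) (b I) J) = e := by
  simp only [absEdges, mem_union, mem_image, mem_filter, mem_univ, true_and, mem_product,
    Prod.exists, and_assoc]

lemma card_absEdges_le (hk : k = 3 ∨ k = 4) (x a : Fin k → Fin n)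
    (b : Finset (Fin k) → Fin k → Fin n) :
    (absEdges x a b).card ≤ 2 ^ (2 * k - 1) - 2 ^ k + 1 := by
  refine (card_union_le _ _).trans ((add_le_add card_image_le card_image_le).trans ?_)
  rw [card_product]
  rcases hk with rfl | rfl <;> decide

lemma image_mem_allK {f : Fin k → Fin n} (hf : Function.Injective f) :
    univ.image f ∈ allK n k := by
  rw [allK, mem_powersetCard]
  exact ⟨subset_univ _, by rw [card_image_of_injective _ hf, card_univ, Fintype.card_fin]⟩

lemma absEdges_subset_allK {x a : Fin k → Fin n} {b : Finset (Fin k) → Fin k → Fin n}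
    (h : Function.Injective (Sum.elim x (Sum.elim a
      (fun q : {I : Finset (Fin k) // I.Nonempty ∧ Even I.card} × Fin k => b q.1.1 q.2)))) :
    absEdges x a b ⊆ allK n k := by
  intro e he
  rcases mem_absEdges.1 he with ⟨I, -, rfl⟩ | ⟨I, J, hI, -, rfl⟩
  · refine image_mem_allK fun i j hij => ?_
    have := @h (if i ∈ I then Sum.inr (Sum.inl i) else Sum.inl i)
      (if j ∈ I then Sum.inr (Sum.inl j) else Sum.inl j) (by
        simp only [cpVert] at hij
        split_ifs at hij ⊢ <;> simpa using hij)
    split_ifs at this <;> simpa using this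
  · refine image_mem_allK fun i j hij => ?_
    have := @h (if i ∈ J then Sum.inr (Sum.inr (⟨I, hI⟩, i))
        else if i ∈ I then Sum.inr (Sum.inl i) else Sum.inl i)
      (if j ∈ J then Sum.inr (Sum.inr (⟨I, hI⟩, j))
        else if j ∈ I then Sum.inr (Sum.inl j) else Sum.inl j) (by
        simp only [cpVert] at hij
        split_ifs at hij ⊢ <;> simpa using hij)
    split_ifs at this <;> simp_all

lemma map_cpVert {V W : Type*} (f : V → W) (x a : Fin k → V) (I : Finset (Fin k)) (i : Fin k) :
    f (cpVert x a I i) = cpVert (f ∘ x) (f ∘ a) I i :=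
  apply_ite f _ _ _

lemma map_leftInverse_of_mem_image {F : Type*} [DecidableEq F] {π : Fin n → F} {g : F → Fin n}
    (hg : Function.LeftInverse g π) {u : F} (hu : u ∈ univ.image π) : π (g u) = u := by
  obtain ⟨v, _, rfl⟩ := mem_image.1 hu
  rw [hg v]

variable {F : Type*} [Field F]

/-- The vertices of the associated cross-polytopes, obtained from their labels by a left
inverse `g` of the labelling. -/
def absVert (π : Fin n → F) (g : F → Fin n) (x a : Fin k → Fin n) (I : Finset (Fin k))
    (i : Fin k) : Fin n :=
  g (cpVert (π ∘ x) (π ∘ a) I i + ∑ j, cpVert (π ∘ x) (π ∘ a) I j)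

/-- Different tuples spanning absorbers yield at most `k ^ k` equal vertex sets. -/
lemma card_le_mul_absorberCount {π : Fin n → F} {x : Fin k → Fin n}
    {Y : Finset (Fin k → Fin n)} {H : Finset (Finset (Fin n))}
    (hY : ∀ a ∈ Y, SpansAbsorber n k F π H x a) :
    Y.card ≤ k ^ k * absorberCount n k F π H (univ.image x) := by
  have h1 : Y.card ≤ k ^ k * (Y.image fun a => univ.image a).card := by
    refine Finset.card_le_mul_card_image Y _ fun A hA => ?_
    obtain ⟨a₀, _, rfl⟩ := mem_image.1 hA
    have hsub : (Y.filter fun a => univ.image a = univ.image a₀)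
        ⊆ Fintype.piFinset fun _ : Fin k => univ.image a₀ := by
      intro a ha
      rw [Fintype.mem_piFinset]
      intro i
      rw [← (mem_filter.1 ha).2]
      exact mem_image_of_mem a (mem_univ i)
    refine (card_le_card hsub).trans ?_
    rw [Fintype.card_piFinset_const]
    refine Nat.pow_le_pow_left (card_image_le.trans ?_) k
    simp
  refine h1.trans (Nat.mul_le_mul_left _ ?_)
  rw [absorberCount, ← Set.ncard_coe_finset]
  refine Set.ncard_le_ncard ?_ (Set.toFinite _)
  intro A hA
  obtain ⟨a, ha, rfl⟩ := mem_image.1 (mem_coe.1 hA)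
  exact ⟨x, a, rfl, rfl, hY a ha⟩

variable [DecidableEq F] {π : Fin n → F} {g : F → Fin n} {x a : Fin k → Fin n}

lemma injective_absorber_vertices (hg : Function.LeftInverse g π)
    (hinj : Function.Injective (absLabel (π ∘ x) (π ∘ a)))
    (hmem : ∀ s, newLabel (π ∘ x) (π ∘ a) s ∈ univ.image π) :
    Function.Injective (Sum.elim x (Sum.elim a
      (fun q : {I : Finset (Fin k) // I.Nonempty ∧ Even I.card} × Fin k =>
        absVert π g x a q.1.1 q.2))) := by
  refine Function.Injective.of_comp (f := π) ?_
  convert hinj.comp (Option.some_injective _) using 1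
  funext s
  match s with
  | Sum.inl i => rfl
  | Sum.inr (Sum.inl i) => rfl
  | Sum.inr (Sum.inr q) => exact map_leftInverse_of_mem_image hg (hmem (Sum.inr q))

lemma spansAbsorber_of_absEdges_subset (hg : Function.LeftInverse g π)
    (hinj : Function.Injective (absLabel (π ∘ x) (π ∘ a)))
    (hmem : ∀ s, newLabel (π ∘ x) (π ∘ a) s ∈ univ.image π) {H : Finset (Finset (Fin n))}
    (hH : absEdges x a (absVert π g x a) ⊆ H) : SpansAbsorber n k F π H x a := by
  refine ⟨absVert π g x a, injective_absorber_vertices hg hinj hmem, ?_, ?_⟩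
  · exact fun I hI => hH (mem_absEdges.2 (Or.inl ⟨I, hI, rfl⟩))
  · intro I hI hev
    have hlab : ∀ i, π (absVert π g x a I i) = cpVert (π ∘ x) (π ∘ a) I i
        + ∑ j, cpVert (π ∘ x) (π ∘ a) I j := fun i =>
      map_leftInverse_of_mem_image hg (hmem (Sum.inr (⟨I, hI, hev⟩, i)))
    refine ⟨?_, ?_, ?_⟩
    · intro h0
      simp only [map_cpVert] at h0
      obtain ⟨i, hi⟩ := hI
      have heq : absLabel (π ∘ x) (π ∘ a) (some (Sum.inr (Sum.inr (⟨I, ⟨i, hi⟩, hev⟩, i))))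
          = absLabel (π ∘ x) (π ∘ a) (some (Sum.inr (Sum.inl i))) := by
        have hy : cpVert (π ∘ x) (π ∘ a) I i = π (a i) := if_pos hi
        simp [absLabel, newLabel, h0, hy]
      simpa using hinj heq
    · intro i
      rw [hlab i]
      simp only [map_cpVert]
    · exact fun J hJ => hH (mem_absEdges.2 (Or.inr ⟨I, J, ⟨hI, hev⟩, hJ, rfl⟩))

/-- Every edge of an absorber has a vertex outside the absorbed edge. -/
lemma exists_newLabel_of_mem_absEdges (hg : Function.LeftInverse g π)
    (hmem : ∀ s, newLabel (π ∘ x) (π ∘ a) s ∈ univ.image π) {e : Finset (Fin n)}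
    (he : e ∈ absEdges x a (absVert π g x a)) :
    ∃ s, ∃ v ∈ e, newLabel (π ∘ x) (π ∘ a) s = π v := by
  rcases mem_absEdges.1 he with ⟨I, hI, rfl⟩ | ⟨I, J, hI, ⟨i, hi⟩, rfl⟩
  · obtain ⟨i, hi⟩ : I.Nonempty := by
      rw [← card_pos]
      exact hI.pos
    refine ⟨Sum.inl i, a i, mem_image.2 ⟨i, mem_univ i, ?_⟩, rfl⟩
    simp [cpVert, hi]
  · refine ⟨Sum.inr (⟨I, hI⟩, i), absVert π g x a I i, mem_image.2 ⟨i, mem_univ i, ?_⟩, ?_⟩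
    · simp [cpVert, hi]
    · exact (map_leftInverse_of_mem_image hg (hmem (Sum.inr (⟨I, hI⟩, i)))).symm

variable [Fintype F]

lemma card_comp_mem_absTuples (hπ : Function.Injective π) :
    (univ.filter fun a : Fin k → Fin n => π ∘ a ∈ absTuples (univ.image π) (π ∘ x)).card
      = (absTuples (univ.image π) (π ∘ x)).card := by
  refine Finset.card_bij (fun a _ => π ∘ a) (fun a ha => (mem_filter.1 ha).2)
    (fun a _ a' _ h => hπ.comp_left h) fun y hy => ?_
  have hmem : ∀ i, ∃ v, π v = y i := fun i => by
    obtain ⟨v, _, hv⟩ := mem_image.1 ((mem_filter.1 hy).2.2 (Sum.inl i))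
    exact ⟨v, hv⟩
  choose a ha using hmem
  have hya : π ∘ a = y := funext ha
  exact ⟨a, mem_filter.2 ⟨mem_univ a, hya ▸ hy⟩, hya⟩

lemma card_filter_mem_absEdges_le [CharP F 2] (hπ : Function.Injective π)
    (hg : Function.LeftInverse g π) {e : Finset (Fin n)} (he : e ∈ allK n k) :
    ((univ.filter fun a : Fin k → Fin n => π ∘ a ∈ absTuples (univ.image π) (π ∘ x)).filter
      fun a => e ∈ absEdges x a (absVert π g x a)).card
      ≤ Fintype.card (NewIx k) * k * Fintype.card F ^ (k - 1) := by
  have hsub : ((univ.filter fun a : Fin k → Fin n =>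
      π ∘ a ∈ absTuples (univ.image π) (π ∘ x)).filter
        fun a => e ∈ absEdges x a (absVert π g x a)) ⊆
      ((univ : Finset (NewIx k)) ×ˢ e).biUnion fun r =>
        univ.filter fun a : Fin k → Fin n => newLabel (π ∘ x) (π ∘ a) r.1 = π r.2 := by
    intro a ha
    obtain ⟨ha1, ha2⟩ := mem_filter.1 ha
    obtain ⟨s, v, hv, hs⟩ := exists_newLabel_of_mem_absEdges hg
      (mem_filter.1 (mem_filter.1 ha1).2).2.2 ha2
    exact mem_biUnion.2 ⟨(s, v), mem_product.2 ⟨mem_univ s, hv⟩, mem_filter.2 ⟨mem_univ a, hs⟩⟩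
  refine (card_le_card hsub).trans ((card_biUnion_le_card_mul _ _ (Fintype.card F ^ (k - 1))
    fun r _ => ?_).trans ?_)
  · refine le_trans (Finset.card_le_card_of_injOn (fun a => π ∘ a) ?_ ?_)
      (card_newLabel_eq_le (π ∘ x) r.1 (π r.2))
    · exact fun a ha => mem_filter.2 ⟨mem_univ _, (mem_filter.1 ha).2⟩
    · exact (hπ.comp_left).injOn
  · rw [card_product, card_univ, (mem_powersetCard.1 he).2]

/-- Conditionally on a rich labelling, a fixed edge has many absorbers with very high
probability. -/
lemma binExp_absorberCount_lt [CharP F 2] (hk : k = 3 ∨ k = 4) {p : ℝ} (hp0 : 0 ≤ p) (hp1 : p ≤ 1)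
    (hπ : Function.Injective π) (hπ0 : ∀ v, π v ≠ 0) {L : ℝ} (hL : 0 < L)
    (hrich : AbsRich k (univ.image π) L) {X : Finset (Fin n)} (hX : X.card = k) :
    binExp p (allK n k) (fun H => if (absorberCount n k F π H X : ℝ)
        < L * p ^ (2 ^ (2 * k - 1) - 2 ^ k + 1) / 2 / (k : ℝ) ^ k then 1 else 0)
      ≤ Real.exp (-(L * p ^ (2 * (2 ^ (2 * k - 1) - 2 ^ k + 1))
          / (16 * (Fintype.card (NewIx k) * k * (Fintype.card F : ℝ) ^ (k - 1))
            * (2 ^ (2 * k - 1) - 2 ^ k + 1 : ℕ)))) := by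
  have hkpos : 0 < k := by omega
  have hkpos' : (0 : ℝ) < k := Nat.cast_pos.2 hkpos
  have hM' : (0 : ℝ) < Fintype.card (NewIx k) := Nat.cast_pos.2 (card_newIx_pos hk)
  have hq0 : (0 : ℝ) < Fintype.card F := Nat.cast_pos.2 Fintype.card_pos
  obtain ⟨x, hx, rfl⟩ : ∃ x : Fin k → Fin n, Function.Injective x ∧ univ.image x = X :=
    ⟨X.orderEmbOfFin hX, (X.orderEmbOfFin hX).injective, by
      apply Finset.coe_injective
      simp⟩
  have : Nonempty (Fin n) := ⟨x ⟨0, hkpos⟩⟩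
  have hg : Function.LeftInverse (Function.invFun π) π := Function.leftInverse_invFun hπ
  set Y := univ.filter fun a : Fin k → Fin n => π ∘ a ∈ absTuples (univ.image π) (π ∘ x) with hY
  have hYmem : ∀ a ∈ Y, Function.Injective (absLabel (π ∘ x) (π ∘ a)) ∧
      ∀ s, newLabel (π ∘ x) (π ∘ a) s ∈ univ.image π := fun a ha =>
    (mem_filter.1 (mem_filter.1 ha).2).2
  have hLY : L ≤ Y.card := by
    rw [hY, card_comp_mem_absTuples hπ]
    exact hrich (π ∘ x) (hπ.comp hx) fun j => hπ0 (x j)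
  refine le_trans (binExp_mono hp0 hp1 fun H _ => ?_) (binExp_lower_tail hp0 hp1 (allK n k) Y
    (fun a => absEdges x a (absVert π (Function.invFun π) x a)) (2 ^ (2 * k - 1) - 2 ^ k + 1)
    (Fintype.card (NewIx k) * k * (Fintype.card F : ℝ) ^ (k - 1)) L (Nat.succ_pos _)
    (by positivity) hL hLY ?_ ?_ ?_)
  · have hle : ((Y.filter fun a => absEdges x a (absVert π (Function.invFun π) x a) ⊆ H).card : ℝ)
        ≤ (k : ℝ) ^ k * absorberCount n k F π H (univ.image x) := by
      exact_mod_cast card_le_mul_absorberCount fun a ha =>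
        spansAbsorber_of_absEdges_subset hg (hYmem a (mem_filter.1 ha).1).1
          (hYmem a (mem_filter.1 ha).1).2 (mem_filter.1 ha).2
    split_ifs with h1 h2
    · exact le_rfl
    · rw [lt_div_iff₀' (by positivity)] at h1
      exact absurd (hle.trans_lt h1) h2
    · exact zero_le_one
    · exact le_rfl
  · exact fun a ha => absEdges_subset_allK
      (injective_absorber_vertices hg (hYmem a ha).1 (hYmem a ha).2)
  · exact fun a _ => card_absEdges_le hk _ _ _
  · exact fun e he => by exact_mod_cast card_filter_mem_absEdges_le hπ hg he

end Absorbers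

section Assembly

open Classical in
/-- Averaging over the injection: the event holds for most hypergraphs for most injections. -/
lemma le_hypInjProb {n k : ℕ} {F : Type*} [Fintype F] [DecidableEq F] [Zero F] {p : ℝ}
    {E : Finset (Finset (Fin n)) → (Fin n → F) → Prop} (G : (Fin n → F) → Prop) {δ₁ δ₂ : ℝ}
    (hδ₂ : 0 ≤ δ₂) (hp0 : 0 ≤ p) (hp1 : p ≤ 1)
    (hpos : 0 < (univ.filter fun π : Fin n → F =>
      Function.Injective π ∧ ∀ v, π v ≠ 0).card)
    (hbad : ((univ.filter fun π : Fin n → F =>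
        (Function.Injective π ∧ ∀ v, π v ≠ 0) ∧ ¬ G π).card : ℝ)
      ≤ (univ.filter fun π : Fin n → F =>
        Function.Injective π ∧ ∀ v, π v ≠ 0).card * δ₁)
    (hgood : ∀ π : Fin n → F, Function.Injective π → (∀ v, π v ≠ 0) → G π →
      binExp p (allK n k) (fun H => if E H π then 0 else 1) ≤ δ₂) :
    1 - (δ₁ + δ₂) ≤ hypInjProb n k F p E := by
  set P := univ.filter fun π : Fin n → F => Function.Injective π ∧ ∀ v, π v ≠ 0 with hP
  have hP0 : (0 : ℝ) < P.card := Nat.cast_pos.2 hpos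
  have hinner : ∀ π, ∑ H ∈ (allK n k).powerset,
      (if E H π then p ^ H.card * (1 - p) ^ ((allK n k).card - H.card) else 0)
      = 1 - binExp p (allK n k) (fun H => if E H π then 0 else 1) := by
    intro π
    have hone := binExp_one (p := p) (U := allK n k)
    rw [eq_sub_iff_add_eq, binExp, ← Finset.sum_add_distrib]
    refine Eq.trans ?_ hone
    refine Finset.sum_congr rfl fun H _ => ?_
    split_ifs <;> ring
  have hnn : ∀ π, 0 ≤ 1 - binExp p (allK n k) (fun H => if E H π then 0 else 1) := by
    intro π
    have h := binExp_mono (U := allK n k) (f := fun H => if E H π then 0 else 1)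
      (g := fun _ => 1) hp0 hp1 fun H _ => by split_ifs <;> norm_num
    rw [binExp_one] at h
    exact sub_nonneg.2 h
  rw [hypInjProb, ← hP, le_div_iff₀ hP0]
  simp only [hinner]
  rw [← Finset.sum_filter_add_sum_filter_not P G]
  have h1 : ((P.filter G).card : ℝ) * (1 - δ₂) ≤ ∑ π ∈ P.filter G,
      (1 - binExp p (allK n k) (fun H => if E H π then 0 else 1)) := by
    rw [← nsmul_eq_mul]
    refine Finset.card_nsmul_le_sum _ _ _ fun π hπ => ?_
    obtain ⟨hπ1, hπ2⟩ := mem_filter.1 hπ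
    obtain ⟨hπ3, hπ4⟩ := (mem_filter.1 hπ1).2
    linarith [hgood π hπ3 hπ4 hπ2]
  have h2 : 0 ≤ ∑ π ∈ P.filter (fun π => ¬ G π),
      (1 - binExp p (allK n k) (fun H => if E H π then 0 else 1)) :=
    Finset.sum_nonneg fun π _ => hnn π
  have h3 : ((P.filter G).card : ℝ) + (P.filter fun π => ¬ G π).card = P.card := by
    exact_mod_cast card_filter_add_card_filter_not (s := P) G
  have h4 : (univ.filter fun π : Fin n → F =>
      (Function.Injective π ∧ ∀ v, π v ≠ 0) ∧ ¬ G π) = P.filter fun π => ¬ G π := by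
    rw [hP, filter_filter]
  rw [h4] at hbad
  have h5 : ((P.filter G).card : ℝ) ≤ P.card := by exact_mod_cast card_filter_le _ _
  linarith [mul_le_mul_of_nonneg_right h5 hδ₂]

open Filter Topology in
lemma exists_mul_rpow_mul_exp_neg_sqrt_le (C K a c' : ℝ) (hC : 0 < C) (ha : 0 < a) :
    ∃ n₀ : ℕ, ∀ n : ℕ, n₀ ≤ n →
      C * ((n : ℝ) ^ K * Real.exp (-(a * (n : ℝ) ^ (1 / 2 : ℝ)))) ≤ (n : ℝ) ^ (-c') := by
  have h1 := tendsto_rpow_mul_exp_neg_mul_atTop_nhds_zero (2 * (K + c')) a ha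
  have h2 : Tendsto (fun n : ℕ => (n : ℝ) ^ (1 / 2 : ℝ)) atTop atTop :=
    (tendsto_rpow_atTop (by norm_num)).comp tendsto_natCast_atTop_atTop
  have h3 := (h1.comp h2).eventually (ge_mem_nhds (inv_pos.2 hC))
  obtain ⟨n₀, hn₀⟩ := eventually_atTop.1 (h3.and (eventually_ge_atTop 1))
  refine ⟨n₀, fun n hn => ?_⟩
  obtain ⟨h4, h5⟩ := hn₀ n hn
  have hn0 : (0 : ℝ) < n := by exact_mod_cast h5
  have h6 : ((n : ℝ) ^ (1 / 2 : ℝ)) ^ (2 * (K + c')) = (n : ℝ) ^ K * (n : ℝ) ^ c' := by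
    rw [← Real.rpow_mul hn0.le, ← Real.rpow_add hn0]
    congr 1
    ring
  simp only [Function.comp_apply, h6, neg_mul] at h4
  have hc : (0 : ℝ) < (n : ℝ) ^ c' := Real.rpow_pos_of_pos hn0 _
  rw [Real.rpow_neg hn0.le, ← one_div, le_div_iff₀ hc]
  calc _ = C * ((n : ℝ) ^ K * (n : ℝ) ^ c' * Real.exp (-(a * (n : ℝ) ^ (1 / 2 : ℝ)))) := by ring
    _ ≤ C * C⁻¹ := mul_le_mul_of_nonneg_left h4 hC.le
    _ = 1 := mul_inv_cancel₀ hC.ne'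

open Classical in
lemma card_not_absRich_le {n k : ℕ} {F : Type*} [Field F] [Fintype F] [DecidableEq F] [CharP F 2]
    (hk : k = 3 ∨ k = 4) (hq : 2 * Fintype.card (AbsIx k) ^ 2 ≤ Fintype.card F)
    (hq1 : 2 * n ≤ Fintype.card F) (hq2 : Fintype.card F ≤ 4 * n) :
    ((univ.filter fun π : Fin n → F => (Function.Injective π ∧ ∀ v, π v ≠ 0) ∧
        ¬ AbsRich k (univ.image π)
          ((Fintype.card F : ℝ) ^ k * ((1 / 4) ^ Fintype.card (NewIx k) / 4))).card : ℝ)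
      ≤ (univ.filter fun π : Fin n → F => Function.Injective π ∧ ∀ v, π v ≠ 0).card *
        ((Fintype.card F : ℝ) ^ (k + 1) * Real.exp (-(Fintype.card F *
          ((1 / 4) ^ (2 * Fintype.card (NewIx k)) /
            (32 * (Fintype.card (NewIx k) : ℝ) ^ 2))))) := by
  have hU : (univ.erase (0 : F)).card + 1 = Fintype.card F := by
    rw [card_erase_add_one (mem_univ _), card_univ]
  have hF : 1 < Fintype.card F := Fintype.one_lt_card
  have hUn : n ≤ (univ.erase (0 : F)).card := by omega
  have hUpos : 0 < (univ.erase (0 : F)).card := by omega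
  have hUpos' : (0 : ℝ) < ((univ.erase (0 : F)).card : ℝ) := Nat.cast_pos.2 hUpos
  have h := card_injective_image_le n (univ.erase (0 : F)) hUpos hUn (fun S => ¬ AbsRich k S
    ((Fintype.card F : ℝ) ^ k * ((1 / 4) ^ Fintype.card (NewIx k) / 4)))
  rw [← card_injective_into] at h
  simp only [mem_erase, mem_univ, and_true] at h
  refine h.trans (mul_le_mul_of_nonneg_left ?_ (Nat.cast_nonneg _))
  have hU' : ((univ.erase (0 : F)).card : ℝ) + 1 = Fintype.card F := by exact_mod_cast hU
  rw [hU', pow_succ', mul_assoc]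
  refine mul_le_mul_of_nonneg_left ?_ (Nat.cast_nonneg _)
  refine (le_of_eq ?_).trans
    (binExp_not_absRich (F := F) (p := n / (univ.erase (0 : F)).card) hk ?_ ?_ hq)
  · congr!
  · rw [div_le_div_iff₀ (by norm_num) hUpos']
    have : (Fintype.card F : ℝ) ≤ 4 * n := by exact_mod_cast hq2
    linarith
  · rw [div_le_one hUpos']
    exact_mod_cast hUn

open Classical in
lemma binExp_exists_absorberCount_lt {n k : ℕ} {F : Type*} [Field F] [Fintype F] [DecidableEq F]
    [CharP F 2] (hk : k = 3 ∨ k = 4) {M : ℕ}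
    (hM : M = 2 ^ (2 * k - 1) - 2 ^ k + 1) {p : ℝ} (hp0 : 0 ≤ p) (hp1 : p ≤ 1) {π : Fin n → F}
    (hπ : Function.Injective π) (hπ0 : ∀ v, π v ≠ 0) {L t : ℝ} (hL : 0 < L)
    (ht : t ≤ L * p ^ M / 2 / (k : ℝ) ^ k)
    (hrich : AbsRich k (univ.image π) L) :
    binExp p (allK n k) (fun H => if ∀ x : Finset (Fin n), x.card = k →
        t ≤ (absorberCount n k F π H x : ℝ) then 0 else 1)
      ≤ (n : ℝ) ^ k * Real.exp (-(L * p ^ (2 * M)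
          / (16 * (Fintype.card (NewIx k) * k * (Fintype.card F : ℝ) ^ (k - 1))
            * M))) := by
  have hcard : ((allK n k).card : ℝ) ≤ (n : ℝ) ^ k := by
    have : (allK n k).card = n.choose k := by simp [allK]
    rw [this]
    exact_mod_cast Nat.choose_le_pow n k
  calc _ ≤ binExp p (allK n k) (fun H => ∑ x ∈ allK n k, if (absorberCount n k F π H x : ℝ)
        < L * p ^ M / 2 / (k : ℝ) ^ k then 1 else 0) := by
        refine binExp_mono hp0 hp1 fun H _ => ?_
        split_ifs with h
        · exact Finset.sum_nonneg fun z _ => by split_ifs <;> norm_num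
        · simp only [not_forall, not_le] at h
          obtain ⟨x, hx, hlt⟩ := h
          refine le_trans (le_of_eq (if_pos (hlt.trans_le ht)).symm)
            (Finset.single_le_sum (f := fun x => if (absorberCount n k F π H x : ℝ)
              < L * p ^ M / 2 / (k : ℝ) ^ k then (1 : ℝ) else 0)
              (fun z _ => ?_) (mem_powersetCard.2 ⟨subset_univ x, hx⟩))
          split_ifs <;> norm_num
    _ = ∑ x ∈ allK n k, _ := binExp_sum _ _
    _ ≤ ∑ _x ∈ allK n k, Real.exp (-(L * p ^ (2 * M)
          / (16 * (Fintype.card (NewIx k) * k * (Fintype.card F : ℝ) ^ (k - 1))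
            * M))) :=
        Finset.sum_le_sum fun x hx => by
          subst hM
          exact binExp_absorberCount_lt hk hp0 hp1 hπ hπ0 hL hrich (mem_powersetCard.1 hx).2
    _ ≤ _ := by
        rw [sum_const, nsmul_eq_mul]
        exact mul_le_mul_of_nonneg_right hcard (Real.exp_pos _).le

end Assembly

/-- for `k ∈ {3,4}` and `M = 2^{2k-1} - 2^k + 1`, there are
`ε₀, c > 0` such that for `0 < ε < ε₀`, with very high probability over
`H ~ H_k(n; n^{-ε})` and a uniformly random injection `π : [n] ↪ F*`, every edge
`x ∈ K_k^n` has at least `c·n^{k - Mε}` absorbers. -/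
theorem stmt_10 (k : ℕ) (hk : k = 3 ∨ k = 4) :
    ∃ ε₀ c : ℝ, 0 < ε₀ ∧ 0 < c ∧
      ∀ ε : ℝ, 0 < ε → ε < ε₀ →
        ∀ c' : ℝ, 0 < c' →
          ∃ n₀ : ℕ, ∀ n : ℕ, n₀ ≤ n →
            ∀ (m : ℕ) (F : Type) [Field F] [Fintype F] [DecidableEq F],
              ringChar F = 2 → Fintype.card F = 2 ^ m → 2 * n ≤ 2 ^ m → 2 ^ m ≤ 4 * n →
              1 - (n : ℝ) ^ (-c') ≤
                hypInjProb n k F ((n : ℝ) ^ (-ε)) (fun H π =>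
                  ∀ x : Finset (Fin n), x.card = k →
                    c * (n : ℝ) ^ ((k : ℝ) - ((2 ^ (2 * k - 1) - 2 ^ k + 1 : ℕ) : ℝ) * ε) ≤
                      (absorberCount n k F π H x : ℝ)) := by
  obtain ⟨M, hMdef⟩ : ∃ M : ℕ, M = 2 ^ (2 * k - 1) - 2 ^ k + 1 := ⟨_, rfl⟩
  simp only [← hMdef]
  set m₁ : ℕ := Fintype.card (NewIx k) with hm₁def
  have hkpos : (0 : ℝ) < k := Nat.cast_pos.2 (by omega)
  have hm₁ : (0 : ℝ) < m₁ := Nat.cast_pos.2 (card_newIx_pos hk)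
  have hM : (0 : ℝ) < M := Nat.cast_pos.2 (hMdef ▸ Nat.succ_pos _)
  set a₁ : ℝ := (1 / 4) ^ (2 * m₁) / (32 * (m₁ : ℝ) ^ 2) with ha₁
  set a₂ : ℝ := (1 / 4) ^ m₁ / 4 / (16 * (m₁ * k) * M) with ha₂
  have ha₁pos : 0 < a₁ := by positivity
  have ha₂pos : 0 < a₂ := by positivity
  refine ⟨1 / (4 * M), (1 / 4) ^ m₁ / 8 / (k : ℝ) ^ k, by positivity, by positivity, ?_⟩
  intro ε hε hε₀ c' _
  set a := min a₁ a₂ with ha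
  have hapos : 0 < a := lt_min ha₁pos ha₂pos
  obtain ⟨n₁, hn₁⟩ := exists_mul_rpow_mul_exp_neg_sqrt_le (4 ^ (k + 1) + 1) ((k + 1 : ℕ) : ℝ) a c'
    (by positivity) hapos
  refine ⟨max n₁ (Fintype.card (AbsIx k) ^ 2 + 1), ?_⟩
  intro n hn m F _ _ _ hchar hcard hq1 hq2
  have hchar2 : CharP F 2 := ringChar.of_eq hchar
  rw [← hcard] at hq1 hq2
  have hnn₁ : n₁ ≤ n := (le_max_left _ _).trans hn
  have hnA : Fintype.card (AbsIx k) ^ 2 + 1 ≤ n := (le_max_right _ _).trans hn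
  have hnpos : 0 < n := by omega
  have hn0 : (0 : ℝ) < n := Nat.cast_pos.2 hnpos
  have hn1 : (1 : ℝ) ≤ n := by exact_mod_cast hnpos
  set p : ℝ := (n : ℝ) ^ (-ε) with hp
  have hp0 : 0 < p := Real.rpow_pos_of_pos hn0 _
  have hp1 : p ≤ 1 := Real.rpow_le_one_of_one_le_of_nonpos hn1 (by linarith)
  set q : ℝ := (Fintype.card F : ℝ) with hqdef
  have hnq : (n : ℝ) ≤ q := by
    rw [hqdef]
    exact_mod_cast (by omega : n ≤ Fintype.card F)
  have hq4 : q ≤ 4 * n := by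
    rw [hqdef]
    exact_mod_cast hq2
  have hq0 : 0 < q := hn0.trans_le hnq
  set L : ℝ := q ^ k * ((1 / 4) ^ m₁ / 4) with hLdef
  have hL : 0 < L := by positivity
  have hsqrt : (n : ℝ) ^ (1 / 2 : ℝ) ≤ n := by
    calc (n : ℝ) ^ (1 / 2 : ℝ) ≤ (n : ℝ) ^ (1 : ℝ) :=
          Real.rpow_le_rpow_of_exponent_le hn1 (by norm_num)
      _ = n := Real.rpow_one _
  have hnp : (n : ℝ) ^ (1 / 2 : ℝ) ≤ n * p ^ (2 * M) := by
    have h1 : (n : ℝ) * p ^ (2 * M) = (n : ℝ) ^ (1 - ε * (2 * M)) := by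
      rw [hp, ← Real.rpow_natCast ((n : ℝ) ^ (-ε)), ← Real.rpow_mul hn0.le, sub_eq_add_neg,
        Real.rpow_add hn0, Real.rpow_one]
      push_cast
      rw [neg_mul]
    rw [h1]
    refine Real.rpow_le_rpow_of_exponent_le hn1 ?_
    rw [lt_div_iff₀ (by positivity)] at hε₀
    linarith
  have hpow : (n : ℝ) ^ ((k : ℝ) - (M : ℝ) * ε) = (n : ℝ) ^ k * p ^ M := by
    rw [hp, ← Real.rpow_natCast ((n : ℝ) ^ (-ε)), ← Real.rpow_mul hn0.le, sub_eq_add_neg,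
      Real.rpow_add hn0, Real.rpow_natCast]
    congr 2
    ring
  have ht : (1 / 4) ^ m₁ / 8 / (k : ℝ) ^ k * (n : ℝ) ^ ((k : ℝ) - (M : ℝ) * ε)
      ≤ L * p ^ M / 2 / (k : ℝ) ^ k := by
    rw [hpow]
    have h1 : (n : ℝ) ^ k ≤ q ^ k := by gcongr
    calc _ = (n : ℝ) ^ k * ((1 / 4) ^ m₁ / 4) * p ^ M / 2 / (k : ℝ) ^ k := by ring
      _ ≤ q ^ k * ((1 / 4) ^ m₁ / 4) * p ^ M / 2 / (k : ℝ) ^ k := by gcongr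
  have hδ₁ : q ^ (k + 1) * Real.exp (-(q * a₁))
      ≤ 4 ^ (k + 1) * ((n : ℝ) ^ (k + 1) * Real.exp (-(a * (n : ℝ) ^ (1 / 2 : ℝ)))) := by
    rw [← mul_assoc, ← mul_pow]
    refine mul_le_mul (by gcongr) (Real.exp_le_exp.2 (neg_le_neg ?_)) (Real.exp_pos _).le
      (by positivity)
    rw [mul_comm]
    exact mul_le_mul (hsqrt.trans hnq) (min_le_left _ _) hapos.le hq0.le
  have hδ₂ : (n : ℝ) ^ k * Real.exp (-(L * p ^ (2 * M) / (16 * (m₁ * k * q ^ (k - 1)) * M)))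
      ≤ (n : ℝ) ^ (k + 1) * Real.exp (-(a * (n : ℝ) ^ (1 / 2 : ℝ))) := by
    refine mul_le_mul (pow_le_pow_right₀ hn1 (Nat.le_succ k)) (Real.exp_le_exp.2 (neg_le_neg ?_))
      (Real.exp_pos _).le (by positivity)
    have h3 : q ^ k = q * q ^ (k - 1) := by
      rw [← pow_succ', Nat.sub_add_cancel (by omega)]
    have h4 : L * p ^ (2 * M) / (16 * (m₁ * k * q ^ (k - 1)) * M) = q * p ^ (2 * M) * a₂ := by
      rw [hLdef, ha₂, h3]
      field_simp
    rw [h4, mul_comm]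
    refine mul_le_mul (hnp.trans ?_) (min_le_right _ _) hapos.le (by positivity)
    gcongr
  have htotal := hn₁ n hnn₁
  rw [Real.rpow_natCast] at htotal
  refine le_trans ?_ (le_hypInjProb (fun π => AbsRich k (univ.image π) L)
    (δ₁ := q ^ (k + 1) * Real.exp (-(q * a₁)))
    (δ₂ := (n : ℝ) ^ k * Real.exp (-(L * p ^ (2 * M) / (16 * (m₁ * k * q ^ (k - 1)) * M))))
    (by positivity) hp0.le hp1 ?_ ?_ ?_)
  · linarith
  · have h := card_injective_into n (univ.erase (0 : F))
    simp only [mem_erase, mem_univ, and_true] at h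
    rw [h, Nat.descFactorial_pos, card_erase_of_mem (mem_univ _), card_univ]
    omega
  · exact card_not_absRich_le hk (by omega) hq1 hq2
  · intro π hπ hπ0 hrich
    refine (le_of_eq ?_).trans
      (binExp_exists_absorberCount_lt hk hMdef hp0.le hp1 hπ hπ0 hL ht hrich)
    congr!
end

section
/- Let k ≥ 3. There exists C = C(k) > 0 such that for every n the following holds. Let F be the finite field with 2^m elements where 2n ≤ 2^m ≤ 4n, let F* = F \ {0}, and let π_1,...,π_{k+1} : [n] ↪ F* be independent uniformly random injections. Then with probability at least 1 − C/n, for every k-element subset x ⊆ [n] there exists some i ∈ [k+1] such that no (k−2)-element subset of x has π_i-images summing to 0 in F. -/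
open Finset

open Classical in
/-- The probability, when `k+1` injections `[n] ↪ F*` are chosen independently
and uniformly at random, of the event `E`. -/
noncomputable def injTupleProb (n : ℕ) (k : ℕ) (F : Type*) [Fintype F] [DecidableEq F]
    [Zero F] (E : (Fin (k + 1) → Fin n → F) → Prop) : ℝ :=
  (((Finset.univ : Finset (Fin (k + 1) → Fin n → F)).filter fun πs =>
      (∀ i, Function.Injective (πs i) ∧ ∀ v, πs i v ≠ 0) ∧ E πs).card : ℝ) /
  (((Finset.univ : Finset (Fin (k + 1) → Fin n → F)).filter fun πs =>
      ∀ i, Function.Injective (πs i) ∧ ∀ v, πs i v ≠ 0).card : ℝ)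

open Classical in
/-- The finset of injections `[n] ↪ F*`, as functions `Fin n → F`. -/
noncomputable def nonzeroInjections (n : ℕ) (F : Type*) [Fintype F] [Zero F] :
    Finset (Fin n → F) :=
  univ.filter fun f => Function.Injective f ∧ ∀ v, f v ≠ 0

theorem mem_nonzeroInjections {n : ℕ} {F : Type*} [Fintype F] [Zero F] {f : Fin n → F} :
    f ∈ nonzeroInjections n F ↔ Function.Injective f ∧ ∀ v, f v ≠ 0 := by
  simp [nonzeroInjections]

theorem nonzeroInjections_nonempty {n : ℕ} {F : Type*} [Fintype F] [DecidableEq F] [Zero F]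
    (h : n + 1 ≤ Fintype.card F) : (nonzeroInjections n F).Nonempty := by
  have hc : Fintype.card (Fin n) ≤ Fintype.card {x : F // x ≠ 0} := by
    rw [Fintype.card_fin, Fintype.card_subtype_compl, Fintype.card_subtype_eq]
    omega
  obtain ⟨e⟩ := Function.Embedding.nonempty_of_card_le hc
  exact ⟨fun v => (e v : F), mem_nonzeroInjections.2
    ⟨Subtype.val_injective.comp e.injective, fun v => (e v).2⟩⟩

open Classical in
/-- A nonempty sum of values of a random injection `[n] ↪ F*` vanishes with probability at most
`1 / n`, because, given the other values, the value at one point is uniform over at least `n`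
elements. -/
theorem card_filter_sum_eq_zero_mul_le {n : ℕ} {F : Type*} [Fintype F] [AddCommGroup F]
    (h : 2 * n ≤ Fintype.card F) {s : Finset (Fin n)} (hs : s.Nonempty) :
    #{f ∈ nonzeroInjections n F | ∑ v ∈ s, f v = 0} * n ≤ #(nonzeroInjections n F) := by
  obtain ⟨v, hv⟩ := hs
  rw [← mul_one #(nonzeroInjections n F)]
  refine card_mul_le_card_mul (fun f g => ∀ w, w ≠ v → f w = g w) ?_ ?_
  · intro f hf
    obtain ⟨hinj, hne⟩ := mem_nonzeroInjections.1 (mem_filter.1 hf).1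
    set T : Finset F := (insert 0 ((univ.erase v).image f))ᶜ with hT
    have hTc : n ≤ #T := by
      have h1 : #(insert 0 ((univ.erase v).image f)) ≤ n := by
        refine (card_insert_le _ _).trans ?_
        have h2 : #((univ.erase v).image f) ≤ #(univ.erase v) := card_image_le
        rw [card_erase_of_mem (mem_univ v), card_univ, Fintype.card_fin] at h2
        have := v.pos
        omega
      rw [hT, card_compl]
      omega
    refine hTc.trans ?_
    rw [← card_image_of_injective T (Function.update_injective f v)]
    refine card_le_card fun g hg => ?_
    obtain ⟨c, hc, rfl⟩ := mem_image.1 hg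
    simp only [hT, mem_compl, mem_insert, mem_image, mem_erase, mem_univ, and_true, not_or,
      not_exists, not_and] at hc
    refine (mem_bipartiteAbove _).2 ⟨mem_nonzeroInjections.2 ⟨?_, ?_⟩, fun w hw => ?_⟩
    · intro a b hab
      by_cases ha : a = v <;> by_cases hb : b = v
      · rw [ha, hb]
      · subst ha
        rw [Function.update_self, Function.update_of_ne hb] at hab
        exact absurd hab.symm (hc.2 b hb)
      · subst hb
        rw [Function.update_self, Function.update_of_ne ha] at hab
        exact absurd hab (hc.2 a ha)
      · rw [Function.update_of_ne ha, Function.update_of_ne hb] at hab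
        exact hinj hab
    · intro w
      by_cases hw : w = v
      · subst hw
        rw [Function.update_self]
        exact hc.1
      · rw [Function.update_of_ne hw]
        exact hne w
    · rw [Function.update_of_ne hw]
  · intro g _
    refine card_le_one.2 fun f hf f' hf' => ?_
    obtain ⟨hf, hfg⟩ := (mem_bipartiteBelow _).1 hf
    obtain ⟨hf', hfg'⟩ := (mem_bipartiteBelow _).1 hf'
    have hsum := (mem_filter.1 hf).2
    have hsum' := (mem_filter.1 hf').2
    have hoff : ∀ w, w ≠ v → f w = f' w := fun w hw => (hfg w hw).trans (hfg' w hw).symm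
    rw [← add_sum_erase s _ hv] at hsum hsum'
    rw [sum_congr rfl fun w hw => hoff w (ne_of_mem_erase hw), ← hsum'] at hsum
    funext w
    by_cases hw : w = v
    · rw [hw]
      exact add_right_cancel hsum
    · exact hoff w hw

open Classical in
theorem card_filter_exists_sum_eq_zero_mul_le {n : ℕ} {F : Type*} [Fintype F] [AddCommGroup F]
    (h : 2 * n ≤ Fintype.card F) {j : ℕ} (hj : 0 < j) (x : Finset (Fin n)) :
    #{f ∈ nonzeroInjections n F | ∃ s ⊆ x, #s = j ∧ ∑ v ∈ s, f v = 0} * n ≤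
      (#x).choose j * #(nonzeroInjections n F) := by
  have hsub : {f ∈ nonzeroInjections n F | ∃ s ⊆ x, #s = j ∧ ∑ v ∈ s, f v = 0} ⊆
      (powersetCard j x).biUnion
        fun s => {f ∈ nonzeroInjections n F | ∑ v ∈ s, f v = 0} := by
    intro f hf
    obtain ⟨hf, s, hsx, hsj, hs⟩ := mem_filter.1 hf
    exact mem_biUnion.2 ⟨s, mem_powersetCard.2 ⟨hsx, hsj⟩, mem_filter.2 ⟨hf, hs⟩⟩
  refine (Nat.mul_le_mul_right n ((card_le_card hsub).trans card_biUnion_le)).trans ?_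
  rw [sum_mul, ← card_powersetCard, ← smul_eq_mul]
  refine sum_le_card_nsmul _ _ _ fun s hs => card_filter_sum_eq_zero_mul_le h ?_
  rw [← card_pos, (mem_powersetCard.1 hs).2]
  exact hj

open Classical in
/-- A union bound over the `k`-subsets of `[n]`: the tuples of `k + 1` injections that all have a
vanishing `j`-sum inside a common `k`-subset form a fraction `O(1 / n)` of all tuples. -/
theorem card_filter_forall_exists_sum_eq_zero_mul_le {n : ℕ} {F : Type*} [Fintype F]
    [AddCommGroup F] (h : 2 * n ≤ Fintype.card F) (hn : 0 < n) {j : ℕ} (hj : 0 < j) (k : ℕ) :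
    #((Fintype.piFinset fun _ : Fin (k + 1) => nonzeroInjections n F).filter
      fun πs : Fin (k + 1) → Fin n → F =>
        ∃ x : Finset (Fin n), #x = k ∧
          ∀ i, ∃ s ⊆ x, #s = j ∧ ∑ v ∈ s, πs i v = 0) * n ≤
      (k.choose j) ^ (k + 1) *
        #(Fintype.piFinset fun _ : Fin (k + 1) => nonzeroInjections n F) := by
  set I := nonzeroInjections n F
  have hsub : ((Fintype.piFinset fun _ : Fin (k + 1) => I).filter fun πs : Fin (k + 1) → Fin n → F =>
        ∃ x : Finset (Fin n), #x = k ∧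
          ∀ i, ∃ s ⊆ x, #s = j ∧ ∑ v ∈ s, πs i v = 0) ⊆
      (powersetCard k univ).biUnion fun x => Fintype.piFinset fun _ : Fin (k + 1) =>
        {f ∈ I | ∃ s ⊆ x, #s = j ∧ ∑ v ∈ s, f v = 0} := by
    intro πs hπ
    obtain ⟨hπ, x, hx, hbad⟩ := mem_filter.1 hπ
    exact mem_biUnion.2 ⟨x, mem_powersetCard.2 ⟨subset_univ x, hx⟩, Fintype.mem_piFinset.2
      fun i => mem_filter.2 ⟨Fintype.mem_piFinset.1 hπ i, hbad i⟩⟩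
  refine Nat.le_of_mul_le_mul_right ?_ (pow_pos hn k)
  rw [mul_assoc, ← pow_succ', Fintype.card_piFinset_const, ← mul_pow]
  refine (Nat.mul_le_mul_right _ ((card_le_card hsub).trans card_biUnion_le)).trans ?_
  rw [sum_mul]
  refine (sum_le_card_nsmul _ _ ((k.choose j * #I) ^ (k + 1)) fun x hx => ?_).trans ?_
  · rw [Fintype.card_piFinset_const, ← mul_pow]
    refine Nat.pow_le_pow_left ?_ _
    have := card_filter_exists_sum_eq_zero_mul_le h hj x
    rwa [(mem_powersetCard.1 hx).2] at this
  · rw [card_powersetCard, card_univ, Fintype.card_fin, smul_eq_mul, mul_comm]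
    exact Nat.mul_le_mul_left _ (Nat.choose_le_pow n k)

/-- with probability at least `1 - C/n` over the independent
uniformly random injections `π_1, …, π_{k+1} : [n] ↪ F*`, every `k`-subset
`x ⊆ [n]` has some `i` such that no `(k-2)`-subset of `x` has `π_i`-images
summing to `0`. -/
theorem stmt_11 (k : ℕ) (hk : 3 ≤ k) :
    ∃ C : ℝ, 0 < C ∧
      ∀ (n m : ℕ) (F : Type) [Field F] [Fintype F] [DecidableEq F],
        ringChar F = 2 → Fintype.card F = 2 ^ m → 2 * n ≤ 2 ^ m → 2 ^ m ≤ 4 * n →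
        1 - C / (n : ℝ) ≤
          injTupleProb n k F (fun πs =>
            ∀ x : Finset (Fin n), x.card = k →
              ∃ i : Fin (k + 1), ∀ s ⊆ x, s.card = k - 2 →
                ∑ v ∈ s, πs i v ≠ 0) := by
  classical
  refine ⟨((k.choose (k - 2) : ℕ) : ℝ) ^ (k + 1), pow_pos ?_ _, ?_⟩
  · exact_mod_cast Nat.choose_pos (Nat.sub_le k 2)
  intro n m F _ _ _ _ hcard hlow hup
  have hn : 0 < n := by
    have := Nat.two_pow_pos m
    omega
  rw [← hcard] at hlow
  set A := Fintype.piFinset fun _ : Fin (k + 1) => nonzeroInjections n F with hA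
  have hApos : 0 < #A := by
    rw [hA, Fintype.card_piFinset_const]
    exact pow_pos (card_pos.2 (nonzeroInjections_nonempty (by omega))) _
  have hbad := card_filter_forall_exists_sum_eq_zero_mul_le hlow hn (j := k - 2) (by omega) k
  rw [← hA] at hbad
  set P : (Fin (k + 1) → Fin n → F) → Prop := fun πs =>
    ∃ x : Finset (Fin n), #x = k ∧ ∀ i, ∃ s ⊆ x, #s = k - 2 ∧ ∑ v ∈ s, πs i v = 0 with hP
  have hsplit : #(A.filter P) + #(A.filter fun πs => ¬ P πs) = #A :=
    card_filter_add_card_filter_not _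
  have hprob : injTupleProb n k F (fun πs =>
      ∀ x : Finset (Fin n), x.card = k →
        ∃ i : Fin (k + 1), ∀ s ⊆ x, s.card = k - 2 → ∑ v ∈ s, πs i v ≠ 0) =
      (#(A.filter fun πs => ¬ P πs) : ℝ) / #A := by
    unfold injTupleProb
    congr 3
    · ext πs
      simp [hA, hP, Fintype.mem_piFinset, mem_nonzeroInjections]
    · ext πs
      simp [hA, Fintype.mem_piFinset, mem_nonzeroInjections]
  have hnR : (0 : ℝ) < n := by exact_mod_cast hn
  have hAR : (0 : ℝ) < #A := by exact_mod_cast hApos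
  have hbadR : (#(A.filter P) : ℝ) * n ≤ ((k.choose (k - 2) : ℕ) : ℝ) ^ (k + 1) * #A := by
    exact_mod_cast hbad
  have hsplitR : (#(A.filter fun πs => ¬ P πs) : ℝ) = #A - #(A.filter P) := by
    rw [← hsplit]
    push_cast
    ring
  rw [hprob, hsplitR, sub_div, div_self hAR.ne']
  exact sub_le_sub_left ((div_le_div_iff₀ hAR hnR).2 hbadR) 1
end
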